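/- Let q be a power of 2 and let f ∈ F_q[X]. If H has an absolutely irreducible factor over F_q, then f is not exceptional planar. -/

import Mathlib

open Polynomial

/-- A function on a field of characteristic two is planar if for every nonzero `ε`
the map `x ↦ f (x + ε) + f x + ε * x` is a bijection. -/
def IsPlanarEven {F : Type} [Field F] (f : F → F) : Prop :=
  ∀ ε : F, ε ≠ 0 → Function.Bijective (fun x : F => f (x + ε) + f x + ε * x)

/-- A polynomial over a finite field `K` of characteristic two is exceptional planar
if for infinitely many positive integers `r` it induces a planar function on the
extension of `K` of degree `r`. -/
def IsExceptionalPlanarEven {K : Type} [Field K] [Fintype K] (f : K[X]) : Prop :=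
  Set.Infinite {r : ℕ | 0 < r ∧ ∀ (L : Type) [Field L] [Fintype L] [Algebra K L],
      Fintype.card L = Fintype.card K ^ r →
      IsPlanarEven (fun x : L => Polynomial.aeval x f)}

/-!
Let `P` be the absolutely irreducible factor of `H`. A zero `(x, y, z)` of `P` over an extension `F`
of `K` with `(x + y) * (x + z) ≠ 0` makes `t ↦ f (t + ε) + f t + ε * t`, for `ε = x + z`, take the
same value at `x` and `y`, so that `f` is not planar on `F`. Such zeros exist over all large `F`
because `P` does not divide `(X + Y) * (X + Z)`: otherwise, by symmetry, `(X + Y) ^ 2` would divide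
`f(X) + f(Y) + f(Z) + f(X + Y + Z) + (X + Y) * (X + Z)`, and after the substitution
`Y = X + T`, `Z = 0` only the last term contributes to the monomial `X * T`.

The zeros are found by Stepanov's method. Let `k` have `q` elements and let `A = k[x₁, …, xₙ][y]`
be a finite free extension ring given by a monic equation `G(x, y) = 0`. A rank count on an
infinitesimal neighbourhood of the diagonal of `A` yields a combination `∑ hᵢ ⊗ sᵢ`, with the `sᵢ`
of small degree, that a power of `1 ⊗ y - y ⊗ 1` kills. Its pullback along the graph of the
`q ^ r`-Frobenius is `E = ∑ hᵢ * sᵢ ^ (q ^ r)`; the product of `E` with a power of `y ^ (q ^ r) - y`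
lies in the ideal generated by the `(M + 1)`-th powers of the `xᵢ ^ (q ^ r) - xᵢ`, while `E`
itself has degree at most about `M * q ^ r`. If `δ ≠ 0` vanished at all points of `A` over the
extension of degree `r`, the product of `E` with a power of `δ` would lie in that ideal too, and
so be zero for degree reasons. But `E ≠ 0` for large `r`, since absolute irreducibility makes `k`
the largest perfect subfield of the fraction field of `A`.
-/

section LinearIndependence

variable {F L V ι : Type*} [Field F] [Field L] [Algebra F L] [AddCommGroup V] [Module L V]
  {e : ι → V} {s : Finset ι}

theorem linearIndepOn_intermediateField_iff (S : IntermediateField F L) :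
    LinearIndepOn S e (s : Set ι) ↔
      ∀ c : ι → L, (∀ i ∈ s, c i ∈ S) → ∑ i ∈ s, c i • e i = 0 → ∀ i ∈ s, c i = 0 := by
  rw [linearIndepOn_finset_iff]
  refine ⟨fun h c hc hsum i hi ↦ ?_, fun h c hsum i hi ↦ ?_⟩
  · classical
    have := h (fun i ↦ if hi : i ∈ s then ⟨c i, hc i hi⟩ else 0)
      ((Finset.sum_congr rfl fun i hi ↦ by simp [hi, IntermediateField.smul_def]).trans hsum) i hi
    simpa only [hi, dite_true, Subtype.ext_iff, ZeroMemClass.coe_zero] using this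
  · simpa using h (fun i ↦ c i) (fun i _ ↦ (c i).2) hsum i hi

theorem mem_span_intermediateField_iff (S : IntermediateField F L) {v : V} :
    v ∈ Submodule.span S (e '' (s : Set ι)) ↔
      ∃ c : ι → L, (∀ i ∈ s, c i ∈ S) ∧ ∑ i ∈ s, c i • e i = v := by
  classical
  rw [Submodule.mem_span_image_finset_iff_exists_fun]
  refine ⟨fun ⟨c, hc⟩ ↦ ⟨fun i ↦ if hi : i ∈ s then c ⟨i, hi⟩ else 0,
    fun i hi ↦ by simp [hi], ?_⟩, fun ⟨c, hc, hv⟩ ↦ ?_⟩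
  · rw [← hc, ← Finset.sum_coe_sort]
    exact Finset.sum_congr rfl fun i _ ↦ by simp [IntermediateField.smul_def]
  · exact ⟨fun i ↦ ⟨c i, hc i i.2⟩, (Finset.sum_coe_sort s fun i ↦ c i • e i).trans hv⟩

-- A vector expressible over every `S r` in terms of an `S N`-independent family is so in a unique
-- way, hence with coefficients in the intersection.
theorem exists_linearIndepOn_of_iInf {S : ℕ → IntermediateField F L} (hS : Antitone S)
    (h : LinearIndepOn ↥(⨅ r, S r) e (s : Set ι)) : ∃ r, LinearIndepOn (S r) e (s : Set ι) := by
  classical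
  induction s using Finset.induction_on with
  | empty => exact ⟨0, by simp⟩
  | insert a s ha ih =>
    rw [Finset.coe_insert, linearIndepOn_insert (mod_cast ha)] at h
    obtain ⟨N, hN⟩ := ih h.1
    by_contra! hdep
    have mem_span (r : ℕ) (hr : N ≤ r) : e a ∈ Submodule.span (S r) (e '' (s : Set ι)) := by
      by_contra hmem
      refine hdep r ?_
      rw [Finset.coe_insert, linearIndepOn_insert (mod_cast ha)]
      refine ⟨?_, hmem⟩
      rw [linearIndepOn_intermediateField_iff] at hN ⊢
      exact fun c hc ↦ hN c fun i hi ↦ hS hr (hc i hi)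
    obtain ⟨c, hc, hca⟩ := (mem_span_intermediateField_iff _).1 (mem_span N le_rfl)
    refine h.2 ((mem_span_intermediateField_iff _).2 ⟨c, fun i hi ↦ ?_, hca⟩)
    rw [← SetLike.mem_coe, IntermediateField.coe_iInf, Set.mem_iInter]
    refine fun r ↦ hS (le_max_right N r) ?_
    obtain ⟨c', hc', hca'⟩ := (mem_span_intermediateField_iff _).1 (mem_span _ (le_max_left N r))
    have heq := (linearIndepOn_intermediateField_iff _).1 hN (fun i ↦ c i - c' i)
      (fun i hi ↦ (S N).sub_mem (hc i hi) (hS (le_max_left N r) (hc' i hi)))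
      (by simp only [sub_smul, Finset.sum_sub_distrib, hca, hca', sub_self]) i hi
    rw [sub_eq_zero.1 heq]
    exact hc' i hi

end LinearIndependence

section Frobenius

variable (k : Type*) [Field k] [Fintype k]

/-- The `r`-th iterate `x ↦ x ^ (q ^ r)` of the Frobenius endomorphism over the field `k` with `q`
elements. -/
noncomputable def frobeniusPow (R : Type*) [CommRing R] [Algebra k R] (r : ℕ) : R →ₐ[k] R :=
  FiniteField.frobeniusAlgHom k R ^ r

theorem frobeniusPow_apply {R : Type*} [CommRing R] [Algebra k R] (r : ℕ) (x : R) :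
    frobeniusPow k R r x = x ^ Fintype.card k ^ r := by
  rw [frobeniusPow, AlgHom.coe_pow, FiniteField.coe_frobeniusAlgHom, pow_iterate]

variable (L : Type*) [Field L] [Algebra k L]

/-- The field of elements of `L` having a `q ^ r`-th root for every `r`, where `q` is the number of
elements of the base field `k`; it is the largest perfect subfield of `L`. -/
noncomputable def perfectCore : IntermediateField k L :=
  ⨅ r, (frobeniusPow k L r).fieldRange

variable {L}

theorem mem_fieldRange_frobeniusPow {r : ℕ} {t : L} :
    t ∈ (frobeniusPow k L r).fieldRange ↔ ∃ s : L, s ^ Fintype.card k ^ r = t := by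
  simp [AlgHom.mem_fieldRange, frobeniusPow_apply]

theorem mem_perfectCore {t : L} :
    t ∈ perfectCore k L ↔ ∀ r, ∃ s : L, s ^ Fintype.card k ^ r = t := by
  simp only [perfectCore, ← SetLike.mem_coe, IntermediateField.coe_iInf, Set.mem_iInter]
  simp only [SetLike.mem_coe, mem_fieldRange_frobeniusPow]

theorem antitone_fieldRange_frobeniusPow :
    Antitone fun r ↦ (frobeniusPow k L r).fieldRange := by
  intro r r' hr t ht
  obtain ⟨s, rfl⟩ := (mem_fieldRange_frobeniusPow k).1 ht
  refine (mem_fieldRange_frobeniusPow k).2 ⟨s ^ Fintype.card k ^ (r' - r), ?_⟩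
  rw [← pow_mul, ← pow_add, Nat.sub_add_cancel hr]

end Frobenius

theorem isUnit_of_forall_associated_pow {B : Type*} [CommMonoidWithZero B]
    [UniqueFactorizationMonoid B] {q : ℕ} (hq : 1 < q) {a : B} (ha : a ≠ 0)
    (h : ∀ r, ∃ b, Associated a (b ^ q ^ r)) : IsUnit a := by
  by_contra hu
  obtain ⟨p, hp, hpa⟩ := WfDvdMonoid.exists_irreducible_factor hu ha
  obtain ⟨n, hn⟩ := FiniteMultiplicity.of_not_isUnit hp.not_isUnit ha
  obtain ⟨b, hab⟩ := h (n + 1)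
  have hpb : p ∣ b := hp.prime.dvd_of_dvd_pow (hpa.trans hab.dvd)
  exact hn <| calc
    p ^ (n + 1) ∣ p ^ q ^ (n + 1) := pow_dvd_pow _ (Nat.lt_pow_self hq).le
    _ ∣ b ^ q ^ (n + 1) := pow_dvd_pow_of_dvd hpb _
    _ ∣ a := hab.symm.dvd

theorem associated_num_den_pow {B K : Type*} [CommRing B] [IsDomain B]
    [UniqueFactorizationMonoid B] [Field K] [Algebra B K] [IsFractionRing B K] (s : K) (n : ℕ) :
    Associated (IsFractionRing.num B (s ^ n)) (IsFractionRing.num B s ^ n) ∧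
      Associated (IsFractionRing.den B (s ^ n) : B) ((IsFractionRing.den B s : B) ^ n) := by
  refine IsFractionRing.num_den_unique B (s ^ n) _ (IsFractionRing.den B s ^ n)
    (IsFractionRing.num_den_reduced B s).pow ?_
  rw [IsLocalization.mk'_pow, IsFractionRing.mk'_num_den]

section Frobenius

variable {k : Type*} [Field k] [Fintype k]

theorem perfectCore_eq_bot_of_isFractionRing {B K : Type*} [CommRing B] [IsDomain B]
    [UniqueFactorizationMonoid B] [Algebra k B] [Field K] [Algebra B K] [IsFractionRing B K]
    [Algebra k K] [IsScalarTower k B K]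
    (hunits : ∀ u : B, IsUnit u → u ∈ (algebraMap k B).range) : perfectCore k K = ⊥ := by
  refine eq_bot_iff.2 fun t ht ↦ ?_
  rcases eq_or_ne t 0 with rfl | ht0
  · exact zero_mem _
  have hroot := (mem_perfectCore k).1 ht
  have hnum : IsUnit (IsFractionRing.num B t) := by
    refine isUnit_of_forall_associated_pow Fintype.one_lt_card (q := Fintype.card k)
      (by rwa [Ne, IsFractionRing.num_eq_zero]) fun r ↦ ?_
    obtain ⟨s, rfl⟩ := hroot r
    exact ⟨_, (associated_num_den_pow s _).1⟩
  have hden : IsUnit (IsFractionRing.den B t : B) := by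
    refine isUnit_of_forall_associated_pow Fintype.one_lt_card (q := Fintype.card k)
      (nonZeroDivisors.ne_zero (IsFractionRing.den B t).2) fun r ↦ ?_
    obtain ⟨s, rfl⟩ := hroot r
    exact ⟨_, (associated_num_den_pow s _).2⟩
  obtain ⟨a, ha⟩ := hunits _ hnum
  obtain ⟨b, hb⟩ := hunits _ hden
  rw [← IsFractionRing.mk'_num_den' B t, ← ha, ← hb, ← IsScalarTower.algebraMap_apply,
    ← IsScalarTower.algebraMap_apply]
  exact div_mem (algebraMap_mem _ a) (algebraMap_mem _ b)

theorem perfectCore_fractionRing_mvPolynomial {σ K : Type*} [Field K] [Algebra (MvPolynomial σ k) K]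
    [IsFractionRing (MvPolynomial σ k) K] [Algebra k K] [IsScalarTower k (MvPolynomial σ k) K] :
    perfectCore k K = ⊥ := by
  refine perfectCore_eq_bot_of_isFractionRing (B := MvPolynomial σ k) fun u hu ↦ ?_
  obtain ⟨a, -, rfl⟩ := MvPolynomial.isUnit_iff_eq_C_of_isReduced.1 hu
  exact ⟨a, rfl⟩

variable {L : Type*} [Field L] [Algebra k L]

theorem isAlgebraic_of_mem_perfectCore {K : Type*} [Field K] [Algebra k K] [Algebra K L]
    [FiniteDimensional K L] {t : L} (ht : t ∈ perfectCore k L) :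
    IsAlgebraic (perfectCore k K) t := by
  let s := Finset.range (Module.finrank K L + 1)
  by_contra htrans
  have hpow : LinearIndependent (perfectCore k K) (fun i : ℕ ↦ t ^ i) := by
    have := (basisMonomials (perfectCore k K)).linearIndependent.map' (aeval t).toLinearMap
      (LinearMap.ker_eq_bot.2 (transcendental_iff_injective.1 htrans))
    simpa [Function.comp_def] using this
  have hli : LinearIndepOn (perfectCore k K) (fun i ↦ t ^ i) (s : Set ℕ) :=
    hpow.comp _ Subtype.val_injective
  obtain ⟨r, hr⟩ := exists_linearIndepOn_of_iInf (antitone_fieldRange_frobeniusPow k) hli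
  obtain ⟨u, rfl⟩ := (mem_perfectCore k).1 ht r
  have hu : ¬ LinearIndepOn K (fun i ↦ u ^ i) (s : Set ℕ) := by
    intro h
    have hcard := h.linearIndependent.fintype_card_le_finrank
    simp [s] at hcard
  refine hu (linearIndepOn_finset_iff.2 fun c hc i hi ↦ ?_)
  have := (linearIndepOn_intermediateField_iff _).1 hr (fun i ↦ frobeniusPow k K r (c i))
    (fun i _ ↦ ⟨_, rfl⟩) ?_ i hi
  · exact (map_eq_zero_iff _ (frobeniusPow k K r).toRingHom.injective).1 this
  · have := congrArg (frobeniusPow k L r) hc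
    simpa only [map_sum, map_zero, Algebra.smul_def, map_mul, frobeniusPow_apply, map_pow,
      ← pow_mul, mul_comm] using this

theorem exists_forall_sum_mul_pow_ne_zero (hL : perfectCore k L = ⊥) {ι : Type*} [Fintype ι]
    {h s : ι → L} (hh : h ≠ 0) (hs : LinearIndependent k s) :
    ∃ r₀, ∀ r ≥ r₀, ∑ i, h i * s i ^ Fintype.card k ^ r ≠ 0 := by
  let V := Submodule.span k (Set.range h)
  have : FiniteDimensional k V := FiniteDimensional.span_of_finite k (Set.finite_range h)
  let b := Module.finBasis k V
  let a (i : ι) := b.repr ⟨h i, Submodule.subset_span ⟨i, rfl⟩⟩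
  have hexp (i : ι) : h i = ∑ j, a i j • (b j : L) := by
    simpa only [Submodule.coe_sum, Submodule.coe_smul] using (congrArg Subtype.val
      (b.sum_repr ⟨h i, Submodule.subset_span ⟨i, rfl⟩⟩)).symm
  let T (j : Fin (Module.finrank k V)) : L := ∑ i, a i j • s i
  obtain ⟨j, hj⟩ : ∃ j, T j ≠ 0 := by
    by_contra! hT
    refine hh (funext fun i ↦ ?_)
    have ha (j) : a i j = 0 := Fintype.linearIndependent_iff.1 hs (fun i ↦ a i j) (hT j) i
    simp [hexp, ha]
  have hsum (r : ℕ) : ∑ i, h i * s i ^ Fintype.card k ^ r =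
      ∑ j, frobeniusPow k L r (T j) • (b j : L) := by
    simp only [T, map_sum, map_smul, smul_eq_mul, Finset.sum_mul, hexp, frobeniusPow_apply]
    rw [Finset.sum_comm]
    simp only [smul_mul_assoc, mul_smul_comm, mul_comm]
  have hb : LinearIndepOn (perfectCore k L) (fun j ↦ (b j : L))
      (Finset.univ : Finset (Fin (Module.finrank k V))) := by
    have hbk : LinearIndependent k fun j ↦ (b j : L) :=
      b.linearIndependent.map' V.subtype (Submodule.ker_subtype V)
    rw [linearIndepOn_intermediateField_iff, hL]
    intro c hc hc0
    choose d hd using fun j ↦ IntermediateField.mem_bot.1 (hc j (Finset.mem_univ j))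
    simp only [← hd, smul_eq_mul, ← Algebra.smul_def] at hc0 ⊢
    exact fun j _ ↦ by rw [Fintype.linearIndependent_iff.1 hbk d hc0 j, map_zero]
  obtain ⟨r₀, hr₀⟩ := exists_linearIndepOn_of_iInf (antitone_fieldRange_frobeniusPow k) hb
  refine ⟨r₀, fun r hr h0 ↦ hj ?_⟩
  have := (linearIndepOn_intermediateField_iff _).1 hr₀ (fun j ↦ frobeniusPow k L r (T j))
    (fun j _ ↦ antitone_fieldRange_frobeniusPow k hr ⟨T j, rfl⟩) ((hsum r).symm.trans h0) j
    (Finset.mem_univ j)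
  exact (map_eq_zero_iff _ (frobeniusPow k L r).toRingHom.injective).1 this

end Frobenius

theorem perfectCore_eq_bot_of_finiteDimensional {k K L : Type*} [Field k] [Fintype k] [Field K]
    [Field L] [Algebra k K] [Algebra k L] [Algebra K L] [IsScalarTower k K L]
    [FiniteDimensional K L] (hK : perfectCore k K = ⊥) (hL : algebraicClosure k L = ⊥) :
    perfectCore k L = ⊥ := by
  refine eq_bot_iff.2 fun t ht ↦ hL ▸ (mem_algebraicClosure_iff.2 ?_)
  have halg : IsAlgebraic (perfectCore k K) t := isAlgebraic_of_mem_perfectCore ht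
  rw [hK] at halg
  exact halg.restrictScalars k

section GeometricallyIntegral
open scoped TensorProduct

variable {k : Type*} (Ω : Type*) [Field k] [Field Ω] [Algebra k Ω]

theorem isDomain_tensorProduct_subalgebra {D : Type*} [CommRing D] [Algebra k D]
    [IsDomain (Ω ⊗[k] D)] (A : Subalgebra k D) : IsDomain (Ω ⊗[k] A) :=
  Function.Injective.isDomain (Algebra.TensorProduct.map (AlgHom.id k Ω) A.val)
    (Module.Flat.lTensor_preserves_injective_linearMap (M := Ω) A.val.toLinearMap
      Subtype.val_injective)

theorem isDomain_tensorProduct_mvPolynomial_quotient {τ : Type*} {P : MvPolynomial τ k}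
    (hP : Irreducible (MvPolynomial.map (algebraMap k Ω) P)) :
    IsDomain (Ω ⊗[k] (MvPolynomial τ k ⧸ Ideal.span {P})) := by
  let e : Ω ⊗[k] (MvPolynomial τ k ⧸ Ideal.span {P}) ≃ₐ[Ω]
      MvPolynomial τ Ω ⧸ Ideal.span {MvPolynomial.map (algebraMap k Ω) P} :=
    (Algebra.TensorProduct.tensorQuotientEquiv (R := k) Ω (MvPolynomial τ k) Ω
      (Ideal.span {P})).trans <|
    Ideal.quotientEquivAlg _ _ (MvPolynomial.algebraTensorAlgEquiv k Ω) <| by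
      simp [Ideal.map_span]
  have : (Ideal.span {MvPolynomial.map (algebraMap k Ω) P}).IsPrime :=
    (Ideal.span_singleton_prime hP.ne_zero).2 hP.prime
  exact e.toMulEquiv.isDomain _

theorem algebraicClosure_eq_bot_of_isDomain_tensorProduct [IsAlgClosed Ω] {A L : Type*}
    [CommRing A] [IsDomain A] [Algebra k A] [Field L] [Algebra k L] [Algebra A L]
    [IsScalarTower k A L] [IsFractionRing A L] [IsDomain (Ω ⊗[k] A)] :
    algebraicClosure k L = ⊥ := by
  obtain ⟨E, _, _, φ, ψ, -, hψ, hdisj⟩ :=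
    Subalgebra.LinearDisjoint.exists_field_of_isDomain_of_injective k Ω A
      (algebraMap k Ω).injective (algebraMap k A).injective
  refine eq_bot_iff.2 fun t ht ↦ ?_
  obtain ⟨a, b, hb, rfl⟩ := IsFractionRing.div_surjective (A := A) t
  have hb0 : b ≠ 0 := nonZeroDivisors.ne_zero hb
  let Ψ : L →ₐ[k] E := IsLocalization.liftAlgHom (M := nonZeroDivisors A) (f := ψ) fun y ↦
    ((map_ne_zero_iff ψ hψ).2 (nonZeroDivisors.ne_zero y.2)).isUnit
  obtain ⟨ω, hω⟩ := IsIntegral.mem_range_algHom_of_minpoly_splits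
    ((mem_algebraicClosure_iff.1 ht).isIntegral.map Ψ) (IsAlgClosed.splits _) φ
  have hb' : algebraMap A L b ≠ 0 := by
    rwa [Ne, FaithfulSMul.algebraMap_eq_zero_iff]
  have hΨ (x : A) : Ψ (algebraMap A L x) = ψ x := IsLocalization.lift_eq _ _
  have hωb : φ ω * ψ b = ψ a := by
    rw [← hΨ, ← hΨ, show φ ω = _ from hω, ← map_mul, div_mul_cancel₀ _ hb']
  by_contra hbot
  have hli : LinearIndependent k ![b, a] := by
    refine (LinearIndependent.pair_iff' hb0).2 fun c hc ↦ hbot (IntermediateField.mem_bot.2 ⟨c, ?_⟩)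
    rw [eq_div_iff hb', ← hc, Algebra.smul_def, map_mul, ← IsScalarTower.algebraMap_apply]
  have hli' : LinearIndependent k ![ψ.rangeRestrict b, ψ.rangeRestrict a] := by
    convert! hli.map' ψ.rangeRestrict.toLinearMap ?_ using 1
    · ext i; fin_cases i <;> rfl
    · exact LinearMap.ker_eq_bot.2 ((AlgHom.injective_codRestrict ψ _ _).2 hψ)
  have := Fintype.linearIndependent_iff.1 (hdisj.linearIndependent_right_of_flat hli')
    ![φ.rangeRestrict ω, -1] (by simp [Fin.sum_univ_two, Algebra.smul_def, hωb]) 1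
  simp at this

theorem perfectCore_fractionRing_eq_bot [IsAlgClosed Ω] [Fintype k] {σ A : Type*} [CommRing A]
    [IsDomain A] [Algebra k A] [Algebra (MvPolynomial σ k) A] [IsScalarTower k (MvPolynomial σ k) A]
    [Module.Finite (MvPolynomial σ k) A] [FaithfulSMul (MvPolynomial σ k) A]
    [IsDomain (Ω ⊗[k] A)] :
    perfectCore k (FractionRing A) = ⊥ := by
  let := FractionRing.liftAlgebra (MvPolynomial σ k) (FractionRing A)
  have : FiniteDimensional (FractionRing (MvPolynomial σ k)) (FractionRing A) :=
    .of_isLocalization (MvPolynomial σ k) A (nonZeroDivisors (MvPolynomial σ k))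
  exact perfectCore_eq_bot_of_finiteDimensional (K := FractionRing (MvPolynomial σ k))
    (perfectCore_fractionRing_mvPolynomial (σ := σ))
    (algebraicClosure_eq_bot_of_isDomain_tensorProduct Ω (A := A))

end GeometricallyIntegral

section Rank

variable {A : Type*} [CommRing A] [IsDomain A]

theorem finrank_range_add_finrank_ker_of_isDomain {V W : Type*} [AddCommGroup V] [Module A V]
    [Module.Finite A V] [AddCommGroup W] [Module A W] (g : V →ₗ[A] W) :
    Module.finrank A g.range + Module.finrank A g.ker = Module.finrank A V := by
  rw [← g.quotKerEquivRange.finrank_eq, g.ker.finrank_quotient_add_finrank]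

variable [IsNoetherianRing A] {V : Type*} [AddCommGroup V] [Module A V] [Module.Finite A V]

theorem finrank_le_finrank_range_pow_add (g : V →ₗ[A] V) (j : ℕ) :
    Module.finrank A V ≤ Module.finrank A (g ^ j).range + j * Module.finrank A g.ker := by
  induction j with
  | zero => rw [pow_zero, Module.End.one_eq_id, LinearMap.range_id, finrank_top]; lia
  | succ j ih =>
    let h := g.domRestrict (g ^ j).range
    have hrange : h.range = (g ^ (j + 1)).range := by
      rw [LinearMap.range_domRestrict, ← LinearMap.range_comp, pow_succ', Module.End.mul_eq_comp]
    have hker : Module.finrank A h.ker ≤ Module.finrank A g.ker := by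
      refine LinearMap.finrank_le_finrank_of_injective
        (f := ((g ^ j).range.subtype.comp h.ker.subtype).codRestrict g.ker fun x ↦ x.2) ?_
      exact fun x y hxy ↦ Subtype.ext (Subtype.ext (congrArg (LinearMap.ker g).subtype hxy))
    have hrank := finrank_range_add_finrank_ker_of_isDomain h
    rw [hrange] at hrank
    rw [add_mul, one_mul]
    omega

theorem finrank_le_mul_finrank_ker_of_pow_eq_zero {g : V →ₗ[A] V} {T : ℕ} (hT : g ^ T = 0) :
    Module.finrank A V ≤ T * Module.finrank A g.ker := by
  have h := finrank_le_finrank_range_pow_add g T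
  rwa [hT, LinearMap.range_zero, finrank_bot, zero_add] at h

end Rank

section RankQuotient

variable {A : Type*} [CommRing A] [IsDomain A]

theorem finrank_quotient_span_singleton_add {V : Type*} [CommRing V] [Algebra A V]
    [Module.Finite A V] (γ : V) :
    Module.finrank A (V ⧸ Ideal.span {γ}) + Module.finrank A (LinearMap.mulLeft A γ).range =
      Module.finrank A V := by
  have hrange : (LinearMap.mulLeft A γ).range = (Ideal.span {γ}).restrictScalars A := by
    ext x
    simp [Ideal.mem_span_singleton', mul_comm]
  rw [hrange]
  exact ((Ideal.span {γ}).restrictScalars A).finrank_quotient_add_finrank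

variable [IsNoetherianRing A]

theorem finrank_le_mul_finrank_quotient_of_pow_eq_zero {V : Type*} [CommRing V] [Algebra A V]
    [Module.Finite A V] {γ : V} {T : ℕ} (hγ : γ ^ T = 0) :
    Module.finrank A V ≤ T * Module.finrank A (V ⧸ Ideal.span {γ}) := by
  have h := finrank_range_add_finrank_ker_of_isDomain (LinearMap.mulLeft A γ)
  have h' := finrank_quotient_span_singleton_add (A := A) γ
  have hker := finrank_le_mul_finrank_ker_of_pow_eq_zero (g := LinearMap.mulLeft A γ) (T := T) <| by
    rw [LinearMap.pow_mulLeft, hγ, LinearMap.mulLeft_zero_eq_zero]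
  rwa [show Module.finrank A (V ⧸ Ideal.span {γ}) = Module.finrank A (LinearMap.mulLeft A γ).ker by
    omega]

theorem finrank_quotient_add_mul_finrank_range_mulLeft_le {R : Type*} [CommRing R] [Algebra A R]
    {f g : R} [Module.Finite A (R ⧸ Ideal.span {f})] [Module.Finite A (R ⧸ Ideal.span {g})]
    {T : ℕ} (hfg : f ∣ g ^ T) :
    Module.finrank A (R ⧸ Ideal.span {f}) +
        T * Module.finrank A (LinearMap.mulLeft A (Ideal.Quotient.mk (Ideal.span {g}) f)).range ≤
      T * Module.finrank A (R ⧸ Ideal.span {g}) := by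
  have hf := finrank_le_mul_finrank_quotient_of_pow_eq_zero (A := A)
    (γ := Ideal.Quotient.mk (Ideal.span {f}) g) (T := T) <| by
      rwa [← map_pow, Ideal.Quotient.eq_zero_iff_mem, Ideal.mem_span_singleton]
  have hg := finrank_quotient_span_singleton_add (A := A) (Ideal.Quotient.mk (Ideal.span {g}) f)
  have hcomm := (DoubleQuot.quotQuotEquivCommₐ A (Ideal.span {f}) (Ideal.span {g}))
    |>.toLinearEquiv.finrank_eq
  rw [Ideal.map_span, Ideal.map_span, Set.image_singleton, Set.image_singleton] at hcomm
  rw [← hg, mul_add]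
  exact Nat.add_le_add_right (hf.trans_eq (congrArg (T * ·) hcomm)) _

end RankQuotient

section Truncated

variable (σ A : Type*) [CommRing A] (M : ℕ)

/-- Polynomials in the variables `σ` over `A`, truncated by imposing that the `M`-th power of each
variable vanishes. -/
def TruncatedMvPolynomial : Type _ :=
  MvPolynomial σ A ⧸ Ideal.span (Set.range fun i ↦ (MvPolynomial.X i ^ M : MvPolynomial σ A))

namespace TruncatedMvPolynomial

noncomputable instance : CommRing (TruncatedMvPolynomial σ A M) :=
  inferInstanceAs <| CommRing (MvPolynomial σ A ⧸ _)

noncomputable instance {k : Type*} [CommRing k] [Algebra k A] :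
    Algebra k (TruncatedMvPolynomial σ A M) :=
  inferInstanceAs <| Algebra k (MvPolynomial σ A ⧸ _)

instance {k : Type*} [CommRing k] [Algebra k A] :
    IsScalarTower k A (TruncatedMvPolynomial σ A M) :=
  inferInstanceAs <| IsScalarTower k A (MvPolynomial σ A ⧸ _)

variable {σ}

/-- The class of the variable `i` in the truncated polynomial ring. -/
noncomputable def X (i : σ) : TruncatedMvPolynomial σ A M :=
  Ideal.Quotient.mk _ (MvPolynomial.X i)

variable {A M}

theorem X_pow_eq_zero (i : σ) : X A M i ^ M = 0 :=
  Ideal.Quotient.eq_zero_iff_mem.2 (Ideal.subset_span ⟨i, rfl⟩)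

theorem exists_algHom_X_eq {D : Type*} [CommRing D] [Algebra A D] {d : σ → D}
    (hd : ∀ i, d i ^ M = 0) :
    ∃ θ : TruncatedMvPolynomial σ A M →ₐ[A] D, ∀ i, θ (X A M i) = d i := by
  have hker : Ideal.span (Set.range fun i ↦ (MvPolynomial.X i ^ M : MvPolynomial σ A)) ≤
      RingHom.ker (MvPolynomial.aeval (R := A) d) :=
    Ideal.span_le.2 (Set.range_subset_iff.2 fun i ↦ by simp [RingHom.mem_ker, hd i])
  exact ⟨Ideal.Quotient.liftₐ _ (MvPolynomial.aeval d) fun _ hp ↦ hker hp,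
    fun i ↦ MvPolynomial.aeval_X d i⟩

theorem mem_span_range_X_pow_iff {p : MvPolynomial σ A} :
    p ∈ Ideal.span (Set.range fun i ↦ (MvPolynomial.X i ^ M : MvPolynomial σ A)) ↔
      ∀ a : σ →₀ ℕ, (∀ i, a i < M) → p.coeff a = 0 := by
  have hrange : Set.range (fun i ↦ (MvPolynomial.X i ^ M : MvPolynomial σ A)) =
      (fun a ↦ MvPolynomial.monomial a 1) '' Set.range fun i ↦ Finsupp.single i M := by
    simp only [← Set.range_comp, Function.comp_def, MvPolynomial.X_pow_eq_monomial]
  simp only [hrange, MvPolynomial.mem_ideal_span_monomial_image, MvPolynomial.mem_support_iff,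
    Set.exists_range_iff, Finsupp.single_le_iff]
  exact forall_congr' fun a ↦ by rw [not_imp_comm, not_exists]; simp only [not_le]

variable (σ A M)

theorem nonempty_basis [Finite σ] :
    Nonempty (Module.Basis (σ → Fin M) A (TruncatedMvPolynomial σ A M)) := by
  have := Fintype.ofFinite σ
  let exponent (a : σ → Fin M) : σ →₀ ℕ := Finsupp.equivFunOnFinite.symm fun i ↦ a i
  have exponent_injective : Function.Injective exponent := fun a b h ↦
    funext fun i ↦ Fin.ext (DFunLike.congr_fun h i)
  let φ : MvPolynomial σ A →ₗ[A] (σ → Fin M) → A :=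
    LinearMap.pi fun a ↦ MvPolynomial.lcoeff A (exponent a)
  have hφ : Function.Surjective φ := by
    classical
    refine fun c ↦ ⟨∑ a, MvPolynomial.monomial (exponent a) (c a), funext fun a ↦ ?_⟩
    change MvPolynomial.coeff (exponent a) (∑ b, MvPolynomial.monomial (exponent b) (c b)) = c a
    simp [MvPolynomial.coeff_sum, MvPolynomial.coeff_monomial, exponent_injective.eq_iff]
  have hker : (Ideal.span (Set.range fun i ↦
      (MvPolynomial.X i ^ M : MvPolynomial σ A))).restrictScalars A = φ.ker := by
    ext p
    rw [Submodule.restrictScalars_mem, mem_span_range_X_pow_iff, LinearMap.mem_ker, funext_iff]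
    refine ⟨fun h a ↦ h _ fun i ↦ (a i).2, fun h a ha ↦ ?_⟩
    have ha' : exponent (fun i ↦ ⟨a i, ha i⟩) = a := Finsupp.ext fun _ ↦ rfl
    exact ha' ▸ h fun i ↦ ⟨a i, ha i⟩
  exact ⟨.ofEquivFun <| (Submodule.Quotient.restrictScalarsEquiv A _).symm.trans <|
    (Submodule.quotEquivOfEq _ _ hker).trans (φ.quotKerEquivOfSurjective hφ)⟩

instance [Finite σ] : Module.Finite A (TruncatedMvPolynomial σ A M) :=
  .of_basis (nonempty_basis σ A M).some

instance [Finite σ] : Module.Free A (TruncatedMvPolynomial σ A M) :=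
  .of_basis (nonempty_basis σ A M).some

theorem finrank_eq [Fintype σ] [Nontrivial A] :
    Module.finrank A (TruncatedMvPolynomial σ A M) = M ^ Fintype.card σ := by
  classical
  rw [Module.finrank_eq_card_basis (nonempty_basis σ A M).some, Fintype.card_fun, Fintype.card_fin]

end TruncatedMvPolynomial

theorem pow_dvd_pow_add_of_dvd_sub {R : Type*} [CommRing R] {a b c : R} (h : a ∣ b - c) {N : ℕ}
    (hc : c ^ N = 0) : a ^ N ∣ b ^ (N + N) := by
  rw [← Ideal.mem_span_singleton, ← sub_add_cancel b c]
  refine Ideal.add_pow_mem_of_pow_mem_of_le _ (m := N) (n := N) ?_ (hc ▸ zero_mem _) (by lia)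
  exact Ideal.mem_span_singleton.2 (pow_dvd_pow_of_dvd h N)

theorem finite_quotient_span_of_monic {A C : Type*} [CommRing A] [CommRing C] [Algebra A C]
    [Module.Finite A C] {P : C[X]} (hP : P.Monic) : Module.Finite A (C[X] ⧸ Ideal.span {P}) :=
  have : Module.Finite C (C[X] ⧸ Ideal.span {P}) := hP.finite_adjoinRoot
  Module.Finite.trans C _

theorem finrank_quotient_span_of_monic {A C : Type*} [CommRing A] [CommRing C] [Algebra A C]
    [Nontrivial A] [Nontrivial C] [Module.Free A C] {P : C[X]} (hP : P.Monic) :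
    Module.finrank A (C[X] ⧸ Ideal.span {P}) = P.natDegree * Module.finrank A C := by
  have : Module.Free C (C[X] ⧸ Ideal.span {P}) := hP.free_adjoinRoot
  rw [← Module.finrank_mul_finrank A C (C[X] ⧸ Ideal.span {P}),
    finrank_quotient_span_eq_natDegree' hP, mul_comm]

end Truncated

section Deformation

variable {k σ A : Type*} [Field k] [CommRing A] [Algebra k A]
  [Algebra (MvPolynomial σ k) A] [IsScalarTower k (MvPolynomial σ k) A]

variable (k σ A) in
/-- The homomorphism `k[x] → A[ξ]/(ξ ^ M)` displacing each variable `xᵢ` by `ξᵢ`. -/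
noncomputable def infinitesimalShift (M : ℕ) :
    MvPolynomial σ k →ₐ[k] TruncatedMvPolynomial σ A M :=
  MvPolynomial.aeval fun i ↦
    algebraMap A _ (algebraMap (MvPolynomial σ k) A (MvPolynomial.X i)) +
      TruncatedMvPolynomial.X A M i

theorem infinitesimalShift_sub_mem_nilradical {M : ℕ} (b : MvPolynomial σ k) :
    infinitesimalShift k σ A M b - algebraMap A _ (algebraMap (MvPolynomial σ k) A b) ∈
      nilradical (TruncatedMvPolynomial σ A M) := by
  rw [← Ideal.Quotient.eq]
  suffices h : (Ideal.Quotient.mkₐ k (nilradical (TruncatedMvPolynomial σ A M))).comp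
      (infinitesimalShift k σ A M) = (Ideal.Quotient.mkₐ k _).comp
        ((IsScalarTower.toAlgHom k A _).comp (IsScalarTower.toAlgHom k (MvPolynomial σ k) A)) from
    DFunLike.congr_fun h b
  refine MvPolynomial.algHom_ext fun i ↦ Ideal.Quotient.eq.2 ?_
  have hX : TruncatedMvPolynomial.X A M i ∈ nilradical (TruncatedMvPolynomial σ A M) :=
    ⟨M, TruncatedMvPolynomial.X_pow_eq_zero i⟩
  simpa [infinitesimalShift] using hX

theorem isNilpotent_eval_map_infinitesimalShift {M : ℕ} {y : A} {G : (MvPolynomial σ k)[X]}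
    (hy : aeval y G = 0) :
    IsNilpotent ((G.map (infinitesimalShift k σ A M).toRingHom).eval (algebraMap A _ y)) := by
  rw [← mem_nilradical, ← Ideal.Quotient.eq_zero_iff_mem, eval_map, hom_eval₂]
  have hcomp : (Ideal.Quotient.mk (nilradical (TruncatedMvPolynomial σ A M))).comp
      (infinitesimalShift k σ A M).toRingHom =
        ((Ideal.Quotient.mk _).comp (algebraMap A _)).comp (algebraMap (MvPolynomial σ k) A) :=
    RingHom.ext fun b ↦ Ideal.Quotient.eq.2 (infinitesimalShift_sub_mem_nilradical b)
  rw [hcomp, ← RingHom.comp_apply (Ideal.Quotient.mk _), ← hom_eval₂, ← aeval_def, hy, map_zero]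

variable (A) in
/-- The ring `A[ξ]/(ξ ^ M)[Y]/(G(x + ξ, Y))`. For `A = k[x][Y]/(G)` this is the quotient of
`A ⊗[k] A` by the `M`-th powers of the elements `1 ⊗ xᵢ - xᵢ ⊗ 1`, an infinitesimal neighbourhood of
the diagonal of `A`, with `A` acting through the first factor. -/
abbrev DiagonalThickening (M : ℕ) (G : (MvPolynomial σ k)[X]) : Type _ :=
  (TruncatedMvPolynomial σ A M)[X] ⧸ Ideal.span {G.map (infinitesimalShift k σ A M).toRingHom}

/-- The difference `1 ⊗ y - y ⊗ 1`. -/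
noncomputable def DiagonalThickening.diff (M : ℕ) (G : (MvPolynomial σ k)[X]) (y : A) :
    DiagonalThickening A M G :=
  Ideal.Quotient.mk _ (X - C (algebraMap A _ y))

-- Modulo `(Y - y) ^ N` the `2N`-th power of `G(x + ξ, Y)` vanishes, so the further quotient by
-- `G(x + ξ, Y)` keeps at least `1 / (2N)` of the rank `N * M ^ n`. It is also the cokernel of
-- multiplication by `(Y - y) ^ N` on the thickening.
theorem exists_pow_card_add_two_mul_finrank_range_le [Fintype σ] [IsDomain A] [IsNoetherianRing A]
    {M : ℕ} (hM : M ≠ 0) {y : A} {G : (MvPolynomial σ k)[X]} (hG : G.Monic) (hy : aeval y G = 0) :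
    ∃ N : ℕ, M ^ Fintype.card σ + 2 * Module.finrank A (LinearMap.mulLeft A
      (DiagonalThickening.diff M G y ^ N)).range ≤ 2 * (G.natDegree * M ^ Fintype.card σ) := by
  have := Fin.pos_iff_nonempty.1 (Nat.pos_of_ne_zero hM)
  have : Nontrivial (TruncatedMvPolynomial σ A M) :=
    (TruncatedMvPolynomial.nonempty_basis σ A M).some.repr.toEquiv.nontrivial
  obtain ⟨N, hN⟩ := isNilpotent_eval_map_infinitesimalShift (M := M) hy
  have hN0 : N ≠ 0 := by rintro rfl; simp at hN
  set P := G.map (infinitesimalShift k σ A M).toRingHom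
  have hP : P.Monic := hG.map _
  have hf : ((X - C (algebraMap A (TruncatedMvPolynomial σ A M) y)) ^ N).Monic :=
    (monic_X_sub_C _).pow N
  have hdvd : (X - C (algebraMap A _ y)) ^ N ∣ P ^ (N + N) :=
    pow_dvd_pow_add_of_dvd_sub X_sub_C_dvd_sub_C_eval (by rw [← C_pow, hN, C_0])
  have := finite_quotient_span_of_monic (A := A) hf
  have := finite_quotient_span_of_monic (A := A) hP
  have h := finrank_quotient_add_mul_finrank_range_mulLeft_le (A := A) hdvd
  rw [finrank_quotient_span_of_monic hf, finrank_quotient_span_of_monic hP,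
    TruncatedMvPolynomial.finrank_eq, (monic_X_sub_C _).natDegree_pow, natDegree_X_sub_C, mul_one,
    hG.natDegree_map, map_pow] at h
  refine ⟨N, Nat.le_of_mul_le_mul_left (h.trans_eq' ?_ |>.trans_eq ?_) (Nat.pos_of_ne_zero hN0)⟩
  · rw [DiagonalThickening.diff]
    ring
  · ring

theorem exists_mul_sum_smul_eq_zero [Fintype σ] [IsDomain A] [IsNoetherianRing A] {M : ℕ}
    (hM : M ≠ 0) {y : A} {G : (MvPolynomial σ k)[X]} (hG : G.Monic) (hy : aeval y G = 0)
    {ι : Type*} [Fintype ι] (hι : 2 * (G.natDegree * M ^ Fintype.card σ) <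
      M ^ Fintype.card σ + 2 * Fintype.card ι) :
    ∃ N : ℕ, ∀ s : ι → DiagonalThickening A M G,
      ∃ h : ι → A, h ≠ 0 ∧ DiagonalThickening.diff M G y ^ N * ∑ i, h i • s i = 0 := by
  obtain ⟨N, hN⟩ := exists_pow_card_add_two_mul_finrank_range_le hM hG hy
  refine ⟨N, fun s ↦ ?_⟩
  have : Module.Finite A (DiagonalThickening A M G) := finite_quotient_span_of_monic (hG.map _)
  set γ := DiagonalThickening.diff M G y ^ N
  let Λ : (ι → A) →ₗ[A] _ := (LinearMap.mulLeft A γ).comp (Fintype.linearCombination A s)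
  have hΛ : ¬ Function.Injective Λ := fun hinj ↦ by
    have hle := Submodule.finrank_mono
      (LinearMap.range_comp_le_range (Fintype.linearCombination A s) (LinearMap.mulLeft A γ))
    rw [LinearMap.finrank_range_of_inj hinj, Module.finrank_fintype_fun_eq_card] at hle
    linarith
  obtain ⟨h, hΛh, hne⟩ : ∃ h, Λ h = 0 ∧ h ≠ 0 := by
    simpa [injective_iff_map_eq_zero] using hΛ
  exact ⟨h, hne, by rwa [← Fintype.linearCombination_apply]⟩

end Deformation

section FrobeniusSpecialization

variable {k σ A : Type*} [Field k] [Fintype k] [CommRing A] [Algebra k A]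
  [Algebra (MvPolynomial σ k) A] [IsScalarTower k (MvPolynomial σ k) A]

theorem exists_algHom_infinitesimalShift_eq_frobeniusPow {M r : ℕ} (I : Ideal A)
    (hI : ∀ i, (algebraMap (MvPolynomial σ k) A (MvPolynomial.X i ^ Fintype.card k ^ r -
      MvPolynomial.X i)) ^ M ∈ I) :
    ∃ θ : TruncatedMvPolynomial σ A M →ₐ[A] A ⧸ I, ∀ b : MvPolynomial σ k,
      θ (infinitesimalShift k σ A M b) =
        Ideal.Quotient.mk I (frobeniusPow k A r (algebraMap (MvPolynomial σ k) A b)) := by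
  obtain ⟨θ, hθ⟩ := TruncatedMvPolynomial.exists_algHom_X_eq (D := A ⧸ I) (M := M)
    (A := A) (d := fun i ↦ Ideal.Quotient.mk I (algebraMap (MvPolynomial σ k) A
      (MvPolynomial.X i ^ Fintype.card k ^ r - MvPolynomial.X i))) fun i ↦ by
      rw [← map_pow, Ideal.Quotient.eq_zero_iff_mem]
      exact hI i
  refine ⟨θ, fun b ↦ ?_⟩
  suffices h : (θ.restrictScalars k).comp (infinitesimalShift k σ A M) =
      (Ideal.Quotient.mkₐ k I).comp
        ((frobeniusPow k A r).comp (IsScalarTower.toAlgHom k (MvPolynomial σ k) A)) from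
    DFunLike.congr_fun h b
  refine MvPolynomial.algHom_ext fun i ↦ ?_
  simp [infinitesimalShift, hθ, frobeniusPow_apply]

variable {M r : ℕ} {G : (MvPolynomial σ k)[X]} {y : A} {I : Ideal A}

theorem exists_algHom_diagonalThickening (hy : aeval y G = 0)
    (hI : ∀ i, (algebraMap (MvPolynomial σ k) A (MvPolynomial.X i ^ Fintype.card k ^ r -
      MvPolynomial.X i)) ^ M ∈ I) :
    ∃ Θ : DiagonalThickening A M G →ₐ[A] A ⧸ I,
      Θ (DiagonalThickening.diff M G y) = Ideal.Quotient.mk I (y ^ Fintype.card k ^ r - y) ∧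
      ∀ p : (MvPolynomial σ k)[X],
        Θ (Ideal.Quotient.mk _ (p.map (infinitesimalShift k σ A M).toRingHom)) =
          Ideal.Quotient.mk I (aeval y p ^ Fintype.card k ^ r) := by
  obtain ⟨θ, hθ⟩ := exists_algHom_infinitesimalShift_eq_frobeniusPow I hI
  let φ : A →ₐ[k] A ⧸ I := (Ideal.Quotient.mkₐ k I).comp (frobeniusPow k A r)
  have hcomp : (θ : _ →+* A ⧸ I).comp (infinitesimalShift k σ A M).toRingHom =
      (φ : A →+* A ⧸ I).comp (algebraMap (MvPolynomial σ k) A) := RingHom.ext hθ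
  have heval (p : (MvPolynomial σ k)[X]) :
      eval₂ (θ : _ →+* A ⧸ I) (φ y) (p.map (infinitesimalShift k σ A M).toRingHom) =
        φ (aeval y p) := by
    rw [eval₂_map, hcomp]
    exact (hom_eval₂ p _ (φ : A →+* A ⧸ I) y).symm
  have hroot :
      eval₂ (θ : _ →+* A ⧸ I) (φ y) (G.map (infinitesimalShift k σ A M).toRingHom) = 0 := by
    rw [heval, hy, map_zero]
  let Θ : DiagonalThickening A M G →ₐ[A] A ⧸ I :=
    AdjoinRoot.liftAlgHom _ θ (φ y) hroot
  have hΘ (p : (TruncatedMvPolynomial σ A M)[X]) :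
      Θ (Ideal.Quotient.mk _ p) = eval₂ (θ : _ →+* A ⧸ I) (φ y) p := AdjoinRoot.lift_mk hroot _
  have hφ (a : A) : φ a = Ideal.Quotient.mk I (a ^ Fintype.card k ^ r) := by
    simp [φ, frobeniusPow_apply]
  refine ⟨Θ, ?_, fun p ↦ by rw [hΘ, heval, hφ]⟩
  rw [DiagonalThickening.diff, hΘ, eval₂_sub, eval₂_X, eval₂_C, hφ, map_sub]
  exact congrArg _ (θ.commutes y)

theorem exists_sum_mul_pow_mul_pow_mem [Fintype σ] [IsDomain A] [IsNoetherianRing A]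
    (hM : M ≠ 0) (hG : G.Monic) (hy : aeval y G = 0) {ι : Type*} [Fintype ι]
    (hι : 2 * (G.natDegree * M ^ Fintype.card σ) < M ^ Fintype.card σ + 2 * Fintype.card ι)
    (p : ι → (MvPolynomial σ k)[X]) :
    ∃ (N : ℕ) (h : ι → A), h ≠ 0 ∧ ∀ r : ℕ,
      (y ^ Fintype.card k ^ r - y) ^ N * ∑ i, h i * aeval y (p i) ^ Fintype.card k ^ r ∈
        Ideal.span (Set.range fun i ↦ (algebraMap (MvPolynomial σ k) A
          (MvPolynomial.X i ^ Fintype.card k ^ r - MvPolynomial.X i)) ^ M) := by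
  obtain ⟨N, hN⟩ := exists_mul_sum_smul_eq_zero hM hG hy hι
  obtain ⟨h, hne, hzero⟩ := hN fun i ↦
    Ideal.Quotient.mk _ ((p i).map (infinitesimalShift k σ A M).toRingHom)
  refine ⟨N, h, hne, fun r ↦ ?_⟩
  obtain ⟨Θ, hdiff, hp⟩ := exists_algHom_diagonalThickening (r := r) hy fun i ↦
    Ideal.subset_span (Set.mem_range_self (f := fun i ↦ (algebraMap (MvPolynomial σ k) A
      (MvPolynomial.X i ^ Fintype.card k ^ r - MvPolynomial.X i)) ^ M) i)
  rw [← Ideal.Quotient.eq_zero_iff_mem, ← map_zero Θ, ← hzero]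
  simp only [map_mul, map_pow, map_sum, map_smul, hdiff, hp, Algebra.smul_def,
    Ideal.Quotient.algebraMap_eq]

end FrobeniusSpecialization

section Reduction

variable {σ R : Type*} [CommRing R]

open Classical in
/-- The homomorphism replacing the variable `j` of a multivariate polynomial by the indeterminate of
`(MvPolynomial σ R)[X]`. -/
noncomputable def isolateVar (j : σ) : MvPolynomial σ R →ₐ[R] (MvPolynomial σ R)[X] :=
  MvPolynomial.aeval fun i ↦ if i = j then X else C (MvPolynomial.X i)

theorem eval_isolateVar (j : σ) (f : MvPolynomial σ R) :
    (isolateVar j f).eval (MvPolynomial.X j) = f := by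
  suffices h : ((aeval (MvPolynomial.X j)).restrictScalars R).comp (isolateVar j) =
      AlgHom.id R (MvPolynomial σ R) by simpa [aeval_def] using DFunLike.congr_fun h f
  refine MvPolynomial.algHom_ext fun i ↦ ?_
  by_cases hi : i = j <;> simp [isolateVar, hi]

theorem natDegree_isolateVar_le (j : σ) (f : MvPolynomial σ R) :
    (isolateVar j f).natDegree ≤ f.degreeOf j := by
  classical
  conv_lhs => rw [f.as_sum, map_sum]
  refine natDegree_sum_le_of_forall_le _ _ fun a ha ↦ ?_
  refine le_trans ?_ (MvPolynomial.monomial_le_degreeOf j ha)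
  rw [isolateVar, MvPolynomial.aeval_monomial, Finsupp.prod,
    IsScalarTower.algebraMap_apply R (MvPolynomial σ R)]
  refine (natDegree_C_mul_le _ _).trans ((natDegree_prod_le _ _).trans ?_)
  calc ∑ i ∈ a.support, natDegree _ ≤ ∑ i ∈ a.support, if i = j then a j else 0 := by
        refine Finset.sum_le_sum fun i _ ↦ ?_
        split_ifs with hi
        · simpa [hi] using natDegree_X_pow_le (R := MvPolynomial σ R) (a j)
        · rw [← C_pow, natDegree_C]
    _ ≤ a j := by rw [Finset.sum_ite_eq']; split_ifs <;> simp

theorem isolateVar_aeval_X_self (j : σ) (p : R[X]) :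
    isolateVar j (aeval (MvPolynomial.X j) p) = p.map MvPolynomial.C := by
  rw [← aeval_algHom_apply, isolateVar, MvPolynomial.aeval_X, if_pos rfl]
  exact aeval_X_left_eq_map p

theorem isolateVar_aeval_X_of_ne {i j : σ} (hij : i ≠ j) (p : R[X]) :
    isolateVar j (aeval (MvPolynomial.X i) p) =
      C (aeval (MvPolynomial.X i : MvPolynomial σ R) p) := by
  rw [← aeval_algHom_apply, isolateVar, MvPolynomial.aeval_X, if_neg hij]
  exact aeval_algHom_apply (IsScalarTower.toAlgHom R (MvPolynomial σ R) (MvPolynomial σ R)[X]) _ p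

/-- Reduction of a multivariate polynomial modulo the monic polynomial `P` in the variable `j`. -/
noncomputable def modVar (j : σ) (P : R[X]) : MvPolynomial σ R →ₗ[R] MvPolynomial σ R where
  toFun f := ((isolateVar j f) %ₘ (P.map MvPolynomial.C)).eval (MvPolynomial.X j)
  map_add' f g := by rw [map_add, add_modByMonic, eval_add]
  map_smul' c f := by
    rw [map_smul, ← algebraMap_smul (MvPolynomial σ R) c (isolateVar j f), smul_modByMonic,
      eval_smul, algebraMap_smul, RingHom.id_apply]

theorem modVar_aeval_self_mul {P : R[X]} (hP : P.Monic) (j : σ) (f : MvPolynomial σ R) :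
    modVar j P (aeval (MvPolynomial.X j) P * f) = 0 := by
  rw [modVar, LinearMap.coe_mk, AddHom.coe_mk, map_mul, isolateVar_aeval_X_self,
    (modByMonic_eq_zero_iff_dvd (hP.map _)).2 (dvd_mul_right _ _), eval_zero]

theorem modVar_aeval_mul_of_ne {i j : σ} (hij : i ≠ j) (P p : R[X]) (f : MvPolynomial σ R) :
    modVar j P (aeval (MvPolynomial.X i) p * f) = aeval (MvPolynomial.X i) p * modVar j P f := by
  rw [modVar, LinearMap.coe_mk, AddHom.coe_mk, map_mul, isolateVar_aeval_X_of_ne hij,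
    ← smul_eq_C_mul, smul_modByMonic, eval_smul, smul_eq_mul]

theorem modVar_eq_self {P : R[X]} (hP : P.Monic) {j : σ} {f : MvPolynomial σ R}
    (hf : f.degreeOf j < P.natDegree) : modVar j P f = f := by
  nontriviality R
  rw [modVar, LinearMap.coe_mk, AddHom.coe_mk, (modByMonic_eq_self_iff (hP.map _)).2,
    eval_isolateVar]
  refine degree_lt_degree ?_
  rw [hP.natDegree_map]
  exact (natDegree_isolateVar_le j f).trans_lt hf

theorem modVar_mem_span {j : σ} (Q : R[X]) {P : σ → R[X]} {s : Finset σ} (hj : j ∉ s)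
    {f : MvPolynomial σ R}
    (hf : f ∈ Ideal.span ((fun i ↦ aeval (MvPolynomial.X i) (P i)) '' (s : Set σ))) :
    modVar j Q f ∈ Ideal.span ((fun i ↦ aeval (MvPolynomial.X i) (P i)) '' (s : Set σ)) := by
  suffices h : ∀ a, modVar j Q (f * a) ∈
      Ideal.span ((fun i ↦ aeval (MvPolynomial.X i) (P i)) '' (s : Set σ)) by
    simpa using h 1
  induction hf using Submodule.span_induction with
  | mem _ hx =>
    obtain ⟨i, hi, rfl⟩ := hx
    intro a
    rw [modVar_aeval_mul_of_ne (ne_of_mem_of_not_mem hi hj)]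
    exact Ideal.mul_mem_right _ _ (Ideal.subset_span (Set.mem_image_of_mem _ hi))
  | zero => simp
  | add x y _ _ hx hy => exact fun a ↦ by simpa [add_mul] using add_mem (hx a) (hy a)
  | smul b x _ hx => exact fun a ↦ by simpa [mul_comm, mul_assoc, mul_left_comm] using hx (b * a)

theorem eq_zero_of_mem_span_aeval_X_of_degreeOf_lt {P : σ → R[X]} (hP : ∀ i, (P i).Monic)
    {s : Finset σ} {f : MvPolynomial σ R}
    (hf : f ∈ Ideal.span ((fun i ↦ aeval (MvPolynomial.X i) (P i)) '' (s : Set σ)))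
    (hdeg : ∀ i ∈ s, f.degreeOf i < (P i).natDegree) : f = 0 := by
  classical
  induction s using Finset.induction_on with
  | empty => simpa using hf
  | insert j s hj ih =>
    refine ih ?_ fun i hi ↦ hdeg i (Finset.mem_insert_of_mem hi)
    rw [Finset.coe_insert, Set.image_insert_eq, Ideal.mem_span_insert'] at hf
    obtain ⟨a, ha⟩ := hf
    have hmod := modVar_mem_span (P j) hj ha
    rwa [map_add, mul_comm, modVar_aeval_self_mul (hP j), add_zero,
      modVar_eq_self (hP j) (hdeg j (Finset.mem_insert_self j s))] at hmod

end Reduction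

section CoordinateDegree

variable {σ κ k A : Type*} [Fintype σ] [Fintype κ] [CommRing k] [CommRing A]
  [Algebra (MvPolynomial σ k) A] (b : Module.Basis κ (MvPolynomial σ k) A)

/-- The largest degree in one of the variables of a coordinate of `a` in the basis `b`. It measures
the growth of elements of a finite free `k[x]`-algebra. -/
noncomputable def coordDegree (a : A) : ℕ :=
  Finset.univ.sup fun l : κ × σ ↦ (b.repr a l.1).degreeOf l.2

variable {b}

theorem coordDegree_le_iff {a : A} {D : ℕ} :
    coordDegree b a ≤ D ↔ ∀ l i, (b.repr a l).degreeOf i ≤ D := by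
  simp [coordDegree, Finset.sup_le_iff]

theorem degreeOf_repr_le (a : A) (l : κ) (i : σ) :
    (b.repr a l).degreeOf i ≤ coordDegree b a :=
  coordDegree_le_iff.1 le_rfl l i

theorem coordDegree_sum_le {ι : Type*} {s : Finset ι} {f : ι → A} {D : ℕ}
    (h : ∀ j ∈ s, coordDegree b (f j) ≤ D) : coordDegree b (∑ j ∈ s, f j) ≤ D := by
  refine coordDegree_le_iff.2 fun l i ↦ ?_
  rw [map_sum, Finsupp.finsetSum_apply]
  exact (MvPolynomial.degreeOf_sum_le i s _).trans
    (Finset.sup_le fun j hj ↦ coordDegree_le_iff.1 (h j hj) l i)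

theorem coordDegree_smul_le {p : MvPolynomial σ k} {E : ℕ} (hp : ∀ i, p.degreeOf i ≤ E) (a : A) :
    coordDegree b (p • a) ≤ E + coordDegree b a := by
  refine coordDegree_le_iff.2 fun l i ↦ ?_
  rw [map_smul, Finsupp.smul_apply, smul_eq_mul]
  exact (MvPolynomial.degreeOf_mul_le i _ _).trans (add_le_add (hp i) (degreeOf_repr_le a l i))

variable (b) in
theorem exists_coordDegree_mul_le :
    ∃ c, ∀ a a' : A, coordDegree b (a * a') ≤ coordDegree b a + coordDegree b a' + c := by
  obtain ⟨c, hc⟩ := (Set.finite_range fun l : κ × κ ↦ coordDegree b (b l.1 * b l.2)).bddAbove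
  refine ⟨c, fun a a' ↦ ?_⟩
  have hexpand : a * a' = ∑ l, ∑ l', (b.repr a l * b.repr a' l') • (b l * b l') := by
    conv_lhs => rw [← b.sum_repr a, ← b.sum_repr a', Finset.sum_mul_sum]
    simp only [smul_mul_smul_comm]
  rw [hexpand]
  refine coordDegree_sum_le fun l _ ↦ coordDegree_sum_le fun l' _ ↦ ?_
  have hdeg (i : σ) : (b.repr a l * b.repr a' l').degreeOf i ≤ coordDegree b a + coordDegree b a' :=
    (MvPolynomial.degreeOf_mul_le i _ _).trans
      (add_le_add (degreeOf_repr_le a l i) (degreeOf_repr_le a' l' i))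
  exact (coordDegree_smul_le hdeg _).trans
    (Nat.add_le_add_left (hc (Set.mem_range_self (l, l'))) _)

theorem coordDegree_pow_le {c : ℕ}
    (hc : ∀ a a' : A, coordDegree b (a * a') ≤ coordDegree b a + coordDegree b a' + c) (a : A)
    {j : ℕ} (hj : j ≠ 0) : coordDegree b (a ^ j) ≤ j * (coordDegree b a + c) := by
  induction j, Nat.one_le_iff_ne_zero.2 hj using Nat.le_induction with
  | base => simp
  | succ j hj ih =>
    rw [pow_succ]
    calc _ ≤ _ := hc _ _
      _ ≤ j * (coordDegree b a + c) + coordDegree b a + c := by gcongr; exact ih (by omega)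
      _ = _ := by ring

theorem coordDegree_mul_sum_mul_pow_le {c : ℕ}
    (hc : ∀ a a' : A, coordDegree b (a * a') ≤ coordDegree b a + coordDegree b a' + c)
    {ι : Type*} {s : Finset ι} {h z : ι → A} {p : ι → MvPolynomial σ k} {H D m Q : ℕ}
    (hh : ∀ i ∈ s, coordDegree b (h i) ≤ H) (hz : ∀ i ∈ s, coordDegree b (z i) ≤ D)
    (hp : ∀ i ∈ s, ∀ j, (p i).degreeOf j ≤ m) (hQ : Q ≠ 0) (e : A) :
    coordDegree b (e * ∑ i ∈ s, h i * (p i • z i) ^ Q) ≤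
      coordDegree b e + H + 2 * c + Q * (m + (D + c)) := by
  have hterm : ∀ i ∈ s, coordDegree b (h i * (p i • z i) ^ Q) ≤
      H + (Q * m + Q * (D + c)) + c := fun i hi ↦ by
    rw [_root_.smul_pow]
    refine (hc _ _).trans ?_
    gcongr
    · exact hh i hi
    · refine (coordDegree_smul_le (E := Q * m) (fun j ↦ ?_) _).trans ?_
      · exact (MvPolynomial.degreeOf_pow_le j _ _).trans (Nat.mul_le_mul_left _ (hp i hi j))
      · gcongr
        exact (coordDegree_pow_le hc _ hQ).trans (by gcongr; exact hz i hi)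
  calc _ ≤ _ := hc _ _
    _ ≤ coordDegree b e + (H + (Q * m + Q * (D + c)) + c) + c := by
        gcongr
        exact coordDegree_sum_le hterm
    _ = _ := by ring

variable (b) in
theorem eq_zero_of_mem_span_of_coordDegree_lt {P : σ → k[X]} (hP : ∀ i, (P i).Monic) {a : A}
    (ha : a ∈ Ideal.span (Set.range fun i ↦
      algebraMap (MvPolynomial σ k) A (aeval (MvPolynomial.X i) (P i))))
    (hdeg : ∀ i, coordDegree b a < (P i).natDegree) : a = 0 := by
  have hspan : ∀ l, b.repr a l ∈
      Ideal.span (Set.range fun i ↦ aeval (MvPolynomial.X i : MvPolynomial σ k) (P i)) := by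
    intro l
    obtain ⟨c, rfl⟩ := Ideal.mem_span_range_iff_exists_fun.1 ha
    simp_rw [map_sum, Finsupp.finsetSum_apply, mul_comm (c _), ← Algebra.smul_def, map_smul,
      Finsupp.smul_apply, smul_eq_mul]
    exact sum_mem fun i _ ↦ Ideal.mul_mem_right _ _ (Ideal.subset_span (Set.mem_range_self i))
  refine b.ext_elem_iff.2 fun l ↦ ?_
  rw [map_zero, Finsupp.zero_apply]
  refine eq_zero_of_mem_span_aeval_X_of_degreeOf_lt hP (s := Finset.univ) ?_ fun i _ ↦
    (degreeOf_repr_le a l i).trans_lt (hdeg i)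
  simpa using hspan l

end CoordinateDegree

section Points

theorem span_image_pow_card_mul_add_one_le {R ι : Type*} [CommRing R] (x : ι → R) (M : ℕ)
    (s : Finset ι) :
    Ideal.span (x '' s) ^ (s.card * M + 1) ≤ Ideal.span ((fun i ↦ x i ^ M) '' s) := by
  classical
  induction s using Finset.induction_on with
  | empty => simp
  | insert j s hj ih =>
    rw [Finset.coe_insert, Set.image_insert_eq, Set.image_insert_eq, Ideal.span_insert,
      Ideal.span_insert, Finset.card_insert_of_notMem hj, ← Ideal.span_singleton_pow]
    calc _ = _ := by rw [add_one_mul, add_comm (_ * M), add_assoc]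
      _ ≤ _ := Ideal.sup_pow_add_le_pow_sup_pow
      _ ≤ _ := sup_le_sup_left ih _

theorem exists_algHom_apply_ne_zero_of_forall_pow_eq_self {k S F : Type*} [Field k] [CommRing S]
    [Algebra k S] [Field F] [Fintype F] [Algebra k F] (hS : ∀ t : S, t ^ Fintype.card F = t)
    {δ : S} (hδ : δ ≠ 0) : ∃ ψ : S →ₐ[k] F, ψ δ ≠ 0 := by
  have hcard : 1 < Fintype.card F := Fintype.one_lt_card
  have hmul : δ * (1 - δ ^ (Fintype.card F - 1)) = 0 := by
    rw [mul_sub, mul_one, mul_pow_sub_one (by omega), hS, sub_self]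
  obtain ⟨m, hm, hle⟩ := exists_max_ideal_of_mem_nonunits
    (fun hu : IsUnit _ ↦ hδ (hu.mul_left_eq_zero.1 hmul))
  let _ := Ideal.Quotient.field m
  have hδm : Ideal.Quotient.mk m δ ≠ 0 := fun h ↦ by
    have := Ideal.Quotient.eq_zero_iff_mem.2 hle
    rw [map_sub, map_pow, h, zero_pow (by omega), map_one, sub_zero] at this
    exact one_ne_zero this
  have hmonic : ((X : k[X]) ^ Fintype.card F - X).Monic :=
    monic_X_pow_sub (by rw [degree_X]; exact_mod_cast hcard)
  obtain ⟨φ⟩ : Nonempty (S ⧸ m →ₐ[k] F) := by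
    refine IntermediateField.nonempty_algHom_of_splits fun t ↦ ?_
    have hroot : aeval t ((X : k[X]) ^ Fintype.card F - X) = 0 := by
      obtain ⟨t, rfl⟩ := Ideal.Quotient.mk_surjective t
      rw [map_sub, map_pow, aeval_X, ← map_pow, hS, sub_self]
    refine ⟨⟨_, hmonic, hroot⟩, Splits.of_dvd ?_ (Polynomial.map_ne_zero hmonic.ne_zero)
      (Polynomial.map_dvd _ (minpoly.dvd k t hroot))⟩
    rw [Polynomial.map_sub, Polynomial.map_pow, map_X]
    rw [splits_iff_card_roots, FiniteField.roots_X_pow_card_sub_X,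
      FiniteField.X_pow_card_sub_X_natDegree_eq F hcard]
    rfl
  exact ⟨φ.comp (Ideal.Quotient.mkₐ k m), (map_ne_zero φ).2 hδm⟩

theorem exists_algHom_apply_ne_zero_of_notMem_span {k A F : Type*} [Field k] [Fintype k]
    [CommRing A] [Algebra k A] [Field F] [Fintype F] [Algebra k F] {r : ℕ}
    (hF : Fintype.card F = Fintype.card k ^ r) {s : Set A} (hs : Algebra.adjoin k s = ⊤) {δ : A}
    (hδ : δ ∉ Ideal.span ((fun a ↦ a ^ Fintype.card k ^ r - a) '' s)) :
    ∃ ψ : A →ₐ[k] F, ψ δ ≠ 0 := by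
  set I := Ideal.span ((fun a ↦ a ^ Fintype.card k ^ r - a) '' s)
  have hfrob : (frobeniusPow k (A ⧸ I) r).comp (Ideal.Quotient.mkₐ k I) = Ideal.Quotient.mkₐ k I :=
    AlgHom.ext_of_adjoin_eq_top hs fun a ha ↦ by
      rw [AlgHom.comp_apply, frobeniusPow_apply, ← map_pow]
      exact Ideal.Quotient.eq.2 (Ideal.subset_span (Set.mem_image_of_mem _ ha))
  obtain ⟨ψ, hψ⟩ := exists_algHom_apply_ne_zero_of_forall_pow_eq_self (k := k) (S := A ⧸ I) (F := F)
    (fun t ↦ by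
      obtain ⟨a, rfl⟩ := Ideal.Quotient.mk_surjective t
      rw [hF, ← frobeniusPow_apply]
      exact DFunLike.congr_fun hfrob a)
    (mt Ideal.Quotient.eq_zero_iff_mem.1 hδ)
  exact ⟨ψ.comp (Ideal.Quotient.mkₐ k I), hψ⟩

theorem pow_mul_mem_span_range_pow {R ι : Type*} [CommRing R] [Fintype ι] {x : ι → R} {v δ e : R}
    {M N : ℕ} (hδ : δ ∈ Ideal.span (Set.range x) ⊔ Ideal.span {v})
    (he : v ^ N * e ∈ Ideal.span (Set.range fun i ↦ x i ^ M)) :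
    δ ^ (Fintype.card ι * M + 1 + N) * e ∈ Ideal.span (Set.range fun i ↦ x i ^ M) := by
  have hpow := Ideal.sup_pow_add_le_pow_sup_pow (Ideal.pow_mem_pow hδ (Fintype.card ι * M + 1 + N))
  rw [Ideal.span_singleton_pow, Submodule.mem_sup] at hpow
  obtain ⟨u, hu, w, hw, huw⟩ := hpow
  obtain ⟨w, rfl⟩ := Ideal.mem_span_singleton'.1 hw
  have hle := span_image_pow_card_mul_add_one_le x M Finset.univ
  rw [Finset.coe_univ, Set.image_univ, Set.image_univ, Finset.card_univ] at hle
  rw [← huw, add_mul, mul_assoc]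
  exact add_mem (Ideal.mul_mem_right _ _ (hle hu)) (Ideal.mul_mem_left _ _ he)

end Points

section Stepanov

theorem exists_two_mul_mul_pow_lt (n c d : ℕ) :
    ∃ m, 2 * (d * (m + c) ^ n) < (m + c) ^ n + 2 * (m ^ n * d) := by
  refine ⟨2 * d * n * c + 1, ?_⟩
  set m := 2 * d * n * c + 1
  have hm : (0 : ℚ) < m + c := by positivity
  have hbernoulli : 1 - n * (c / (m + c)) ≤ (m / (m + c) : ℚ) ^ n := by
    have hle : (c / (m + c) : ℚ) ≤ 1 := (div_le_one hm).2 (by simp)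
    have := one_add_mul_le_pow (a := -(c / (m + c) : ℚ)) (by linarith) n
    calc (1 - n * (c / (m + c)) : ℚ) = 1 + n * -(c / (m + c)) := by ring
      _ ≤ _ := this
      _ = _ := by congr 1; field_simp; ring
  have hsmall : 2 * d * (n * (c / (m + c))) < (1 : ℚ) := by
    rw [← mul_div_assoc, ← mul_div_assoc, div_lt_one hm]
    have : (m : ℚ) = 2 * d * n * c + 1 := by simp [m]
    have : (0 : ℚ) ≤ c := c.cast_nonneg
    linarith
  have hlt : (2 * d - 1 : ℚ) < 2 * d * m ^ n / (m + c) ^ n := by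
    rw [mul_div_assoc, ← div_pow]
    calc (2 * d - 1 : ℚ) < 2 * d * (1 - n * (c / (m + c))) := by linarith
      _ ≤ _ := by gcongr
  rw [lt_div_iff₀ (by positivity)] at hlt
  have : (2 * (d * (m + c) ^ n) : ℚ) < (m + c) ^ n + 2 * (m ^ n * d) := by linarith
  exact_mod_cast this

theorem exists_forall_sum_mul_pow_ne_zero_of_isDomain {k A : Type*} [Field k] [Fintype k]
    [CommRing A] [IsDomain A] [Algebra k A] (hA : perfectCore k (FractionRing A) = ⊥) {ι : Type*}
    [Fintype ι] {h s : ι → A} (hh : h ≠ 0) (hs : LinearIndependent k s) :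
    ∃ r₀, ∀ r ≥ r₀, ∑ i, h i * s i ^ Fintype.card k ^ r ≠ 0 := by
  have hinj := FaithfulSMul.algebraMap_injective A (FractionRing A)
  obtain ⟨r₀, hr₀⟩ := exists_forall_sum_mul_pow_ne_zero hA
    (h := fun i ↦ algebraMap A (FractionRing A) (h i))
    (fun h0 ↦ hh <| funext fun i ↦ hinj <| by simpa using congrFun h0 i)
    (hs.map_injOn (IsScalarTower.toAlgHom k A (FractionRing A)).toLinearMap hinj.injOn)
  refine ⟨r₀, fun r hr h0 ↦ hr₀ r hr ?_⟩
  simpa using congrArg (algebraMap A (FractionRing A)) h0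

variable {k σ A : Type*} [Field k] [CommRing A] [Algebra k A]
  [Algebra (MvPolynomial σ k) A] [IsScalarTower k (MvPolynomial σ k) A]

theorem linearIndependent_monomial_smul_basis [Finite σ] {κ : Type*}
    (b : Module.Basis κ (MvPolynomial σ k) A) (m : ℕ) :
    LinearIndependent k fun i : (σ → Fin m) × κ ↦
      MvPolynomial.monomial (Finsupp.equivFunOnFinite.symm fun j ↦ (i.1 j : ℕ)) (1 : k) •
        b i.2 := by
  have hinj : Function.Injective fun i : (σ → Fin m) × κ ↦
      (Finsupp.equivFunOnFinite.symm (fun j ↦ (i.1 j : ℕ)), i.2) := fun i i' h ↦ by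
    obtain ⟨h₁, h₂⟩ := Prod.ext_iff.1 h
    refine Prod.ext (funext fun j ↦ Fin.ext ?_) h₂
    exact congrFun (Finsupp.equivFunOnFinite.symm.injective h₁) j
  simpa [Function.comp_def] using
    ((MvPolynomial.basisMonomials σ k).smulTower b).linearIndependent.comp _ hinj

theorem adjoin_range_X_union_gen (pb : PowerBasis (MvPolynomial σ k) A) :
    Algebra.adjoin k (Set.range (fun i ↦ algebraMap (MvPolynomial σ k) A (MvPolynomial.X i)) ∪
      {pb.gen}) = ⊤ := by
  set S := Algebra.adjoin k
    (Set.range (fun i ↦ algebraMap (MvPolynomial σ k) A (MvPolynomial.X i)) ∪ {pb.gen})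
  have hbase : (IsScalarTower.toAlgHom k (MvPolynomial σ k) A).range ≤ S := by
    rw [← Algebra.map_top, ← MvPolynomial.adjoin_range_X, AlgHom.map_adjoin, ← Set.range_comp]
    exact Algebra.adjoin_mono Set.subset_union_left
  refine eq_top_iff.2 fun a _ ↦ ?_
  have ha : a ∈ Algebra.adjoin (MvPolynomial σ k) {pb.gen} := by
    rw [pb.adjoin_gen_eq_top]
    trivial
  induction ha using Algebra.adjoin_induction with
  | mem a ha => exact Algebra.subset_adjoin (Or.inr ha)
  | algebraMap p => exact hbase ⟨p, rfl⟩
  | add a b _ _ ha hb => exact add_mem (ha trivial) (hb trivial)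
  | mul a b _ _ ha hb => exact mul_mem (ha trivial) (hb trivial)

variable [Fintype k] [IsDomain A]

-- Stepanov's auxiliary function. It vanishes to order `M + 1` along the Frobenius graph, up to a
-- power of `y ^ (q ^ r) - y`, while its degree grows only like `M * q ^ r`.
theorem exists_auxiliary_sum [Fintype σ] (pb : PowerBasis (MvPolynomial σ k) A)
    (hA : perfectCore k (FractionRing A) = ⊥) :
    ∃ (M N C r₀ : ℕ) (E : ℕ → A), ∀ r, (r₀ ≤ r → E r ≠ 0) ∧
      (pb.gen ^ Fintype.card k ^ r - pb.gen) ^ N * E r ∈ Ideal.span (Set.range fun i ↦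
        (algebraMap (MvPolynomial σ k) A
          (MvPolynomial.X i ^ Fintype.card k ^ r - MvPolynomial.X i)) ^ (M + 1)) ∧
      ∀ e, coordDegree pb.basis (e * E r) ≤
        coordDegree pb.basis e + C + Fintype.card k ^ r * M := by
  classical
  obtain ⟨c, hc⟩ := exists_coordDegree_mul_le pb.basis
  obtain ⟨D, hD⟩ := (Set.finite_range fun l ↦ coordDegree pb.basis (pb.basis l)).bddAbove
  obtain ⟨m, hm⟩ := exists_two_mul_mul_pow_lt (Fintype.card σ) (D + c + 1) pb.dim
  have := pb.finite
  have : IsNoetherianRing A := IsNoetherianRing.of_finite (MvPolynomial σ k) A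
  let a (i : (σ → Fin m) × Fin pb.dim) : σ →₀ ℕ :=
    Finsupp.equivFunOnFinite.symm fun j ↦ (i.1 j : ℕ)
  let p (i : (σ → Fin m) × Fin pb.dim) : (MvPolynomial σ k)[X] :=
    C (MvPolynomial.monomial (a i) 1) * X ^ (i.2 : ℕ)
  have hp i : aeval pb.gen (p i) = MvPolynomial.monomial (a i) (1 : k) • pb.basis i.2 := by
    simp [p, Algebra.smul_def]
  obtain ⟨N, h, hne, hmem⟩ := exists_sum_mul_pow_mul_pow_mem (M := m + (D + c) + 1) (by omega)
    (minpoly.monic pb.isIntegral_gen) (minpoly.aeval _ pb.gen)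
    (ι := (σ → Fin m) × Fin pb.dim) (by simpa [add_assoc] using hm) p
  obtain ⟨H, hH⟩ := (Set.finite_range fun i ↦ coordDegree pb.basis (h i)).bddAbove
  obtain ⟨r₀, hr₀⟩ := exists_forall_sum_mul_pow_ne_zero_of_isDomain hA hne
    (linearIndependent_monomial_smul_basis pb.basis m)
  simp only [hp] at hmem
  refine ⟨m + (D + c), N, H + 2 * c, r₀, _, fun r ↦ ⟨hr₀ r, hmem r, fun e ↦ ?_⟩⟩
  rw [← add_assoc]
  refine coordDegree_mul_sum_mul_pow_le hc (fun i _ ↦ hH (Set.mem_range_self i))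
    (fun i _ ↦ hD (Set.mem_range_self i.2)) (fun i _ j ↦ ?_) (by positivity) e
  rw [MvPolynomial.degreeOf_monomial_eq _ _ one_ne_zero]
  exact (i.1 j).2.le

theorem exists_forall_algHom_apply_ne_zero_of_powerBasis [Finite σ]
    (pb : PowerBasis (MvPolynomial σ k) A) (hA : perfectCore k (FractionRing A) = ⊥)
    {δ : A} (hδ : δ ≠ 0) : ∃ r₀, ∀ r ≥ r₀, ∀ (F : Type*) [Field F] [Fintype F] [Algebra k F],
      Fintype.card F = Fintype.card k ^ r → ∃ ψ : A →ₐ[k] F, ψ δ ≠ 0 := by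
  have := Fintype.ofFinite σ
  obtain ⟨M, N, C, r₀, E, hE⟩ := exists_auxiliary_sum pb hA
  let δ' := δ ^ (Fintype.card σ * (M + 1) + 1 + N)
  let r₁ := coordDegree pb.basis δ' + C
  refine ⟨max r₀ r₁, fun r hr F _ _ _ hF ↦ ?_⟩
  obtain ⟨hne, hmem, hdeg⟩ := hE r
  have hr₁ : r₁ < Fintype.card k ^ r :=
    ((le_max_right _ _).trans hr).trans_lt (Nat.lt_pow_self Fintype.one_lt_card)
  have hcard : 1 < Fintype.card k ^ r := hF ▸ Fintype.one_lt_card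
  refine exists_algHom_apply_ne_zero_of_notMem_span hF (adjoin_range_X_union_gen pb) fun hspan ↦ ?_
  rw [Set.image_union, ← Set.range_comp, Set.image_singleton, Ideal.span_union] at hspan
  have hmonic : (X ^ Fintype.card k ^ r - X : k[X]).Monic :=
    monic_X_pow_sub (by rw [degree_X]; exact_mod_cast hcard)
  have hzero : δ' * E r = 0 := by
    refine eq_zero_of_mem_span_of_coordDegree_lt pb.basis (fun _ ↦ hmonic.pow (M + 1)) ?_ fun _ ↦ ?_
    · simpa using pow_mul_mem_span_range_pow hspan (by simpa using hmem)
    · rw [hmonic.natDegree_pow, FiniteField.X_pow_card_sub_X_natDegree_eq k hcard]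
      calc _ ≤ r₁ + Fintype.card k ^ r * M := hdeg δ'
        _ < Fintype.card k ^ r + Fintype.card k ^ r * M := by gcongr
        _ = _ := by ring
  exact (mul_ne_zero (pow_ne_zero _ hδ) (hne ((le_max_left _ _).trans hr))) hzero

end Stepanov

section Hypersurface
open scoped TensorProduct

theorem irreducible_of_irreducible_mvPolynomial_map {σ k Ω : Type*} [Field k] [Field Ω]
    (φ : k →+* Ω) {P : MvPolynomial σ k} (hP : Irreducible (MvPolynomial.map φ P)) :
    Irreducible P := by
  have : IsLocalHom (MvPolynomial.map (σ := σ) φ) := ⟨fun Q hQ ↦ by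
    rw [MvPolynomial.isUnit_iff_totalDegree_of_isReduced] at hQ ⊢
    simpa [MvPolynomial.totalDegree, MvPolynomial.coeff_map,
      MvPolynomial.support_map_of_injective _ φ.injective] using hQ⟩
  exact hP.of_map

theorem exists_degreeOf_ne_zero_of_irreducible {σ k : Type*} [Field k] {P : MvPolynomial σ k}
    (hP : Irreducible P) : ∃ i, P.degreeOf i ≠ 0 := by
  by_contra! h
  refine hP.not_isUnit (MvPolynomial.isUnit_iff_totalDegree_of_isReduced.2 ?_)
  have hdeg : P.totalDegree = 0 := P.totalDegree_eq_zero_iff.2 fun m hm i ↦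
    Nat.le_zero.1 (h i ▸ MvPolynomial.monomial_le_degreeOf i hm)
  refine ⟨isUnit_iff_ne_zero.2 fun h0 ↦ hP.ne_zero ?_, hdeg⟩
  rw [MvPolynomial.totalDegree_eq_zero_iff_eq_C.1 hdeg, h0, map_zero]

theorem exists_algHom_extending {k A D F : Type*} [CommRing k] [CommRing A] [CommRing D] [Field F]
    [Algebra k A] [Algebra k D] [Algebra A D] [Algebra k F] [IsScalarTower k A D]
    [FaithfulSMul A D] {c : A} (hc : ∀ d : D, ∃ (n : ℕ) (a : A), c ^ n • d = algebraMap A D a)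
    {ψ : A →ₐ[k] F} (hψ : ψ c ≠ 0) : ∃ Ψ : D →ₐ[k] F, ∀ a, Ψ (algebraMap A D a) = ψ a := by
  let D' := Localization.Away (algebraMap A D c)
  have hunit : IsUnit (algebraMap A D' c) := by
    rw [IsScalarTower.algebraMap_apply A D D']
    exact IsLocalization.Away.algebraMap_isUnit _
  have : IsLocalization.Away c D' := by
    refine .mk c hunit (fun s ↦ ?_) fun a b hab ↦ ?_
    · obtain ⟨m, d, hd⟩ := IsLocalization.Away.surj (algebraMap A D c) s
      obtain ⟨n, a, ha⟩ := hc d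
      refine ⟨m + n, a, ?_⟩
      rw [IsScalarTower.algebraMap_apply A D D' a, ← ha, Algebra.smul_def, map_mul, ← hd,
        IsScalarTower.algebraMap_apply A D D' c, map_pow, map_pow]
      ring
    · rw [IsScalarTower.algebraMap_apply A D D', IsScalarTower.algebraMap_apply A D D'] at hab
      obtain ⟨n, hn⟩ := IsLocalization.Away.exists_of_eq (algebraMap A D c) hab
      exact ⟨n, FaithfulSMul.algebraMap_injective A D (by simpa using hn)⟩
  refine ⟨(IsLocalization.Away.liftAlgHom (S := D') c hψ.isUnit).comp
    (IsScalarTower.toAlgHom k D D'), fun a ↦ ?_⟩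
  simp only [AlgHom.comp_apply, IsScalarTower.coe_toAlgHom', ← IsScalarTower.algebraMap_apply]
  exact IsLocalization.Away.lift_eq c hψ.isUnit a

variable {k : Type*} (Ω : Type*) [Field k] [Fintype k] [Field Ω] [IsAlgClosed Ω] [Algebra k Ω]

theorem exists_forall_algHom_apply_ne_zero {σ D : Type*} [Finite σ] [CommRing D] [IsDomain D]
    [Algebra k D] [Algebra (MvPolynomial σ k) D] [IsScalarTower k (MvPolynomial σ k) D]
    [FaithfulSMul (MvPolynomial σ k) D] [IsDomain (Ω ⊗[k] D)] {y : D}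
    (hy : IsAlgebraic (MvPolynomial σ k) y) (hgen : Algebra.adjoin (MvPolynomial σ k) {y} = ⊤)
    {δ : D} (hδ : δ ≠ 0) : ∃ r₀, ∀ r ≥ r₀, ∀ (F : Type*) [Field F] [Fintype F] [Algebra k F],
      Fintype.card F = Fintype.card k ^ r → ∃ ψ : D →ₐ[k] F, ψ δ ≠ 0 := by
  obtain ⟨c, hc, hcy⟩ := hy.exists_integral_multiple
  let A := Algebra.adjoin (MvPolynomial σ k) {c • y}
  have hden (d : D) : ∃ (n : ℕ) (a : A),
      algebraMap (MvPolynomial σ k) A c ^ n • d = algebraMap A D a := by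
    obtain ⟨n, hn⟩ := Algebra.pow_smul_mem_adjoin_smul c {y} (x := d) (by rw [hgen]; trivial)
    rw [Set.smul_set_singleton] at hn
    exact ⟨n, ⟨_, hn n le_rfl⟩, by rw [← map_pow, algebraMap_smul]; rfl⟩
  obtain ⟨n, a, ha⟩ := hden δ
  have hc' : algebraMap (MvPolynomial σ k) A c ≠ 0 := by
    rwa [Ne, FaithfulSMul.algebraMap_eq_zero_iff]
  have ha0 : a ≠ 0 := by
    rintro rfl
    rw [map_zero] at ha
    exact smul_ne_zero (pow_ne_zero n hc') hδ ha
  let pb : PowerBasis (MvPolynomial σ k) A := Algebra.adjoin.powerBasis' hcy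
  have := pb.finite
  have : IsDomain (Ω ⊗[k] A) := isDomain_tensorProduct_subalgebra Ω (A.restrictScalars k)
  obtain ⟨r₀, hr₀⟩ := exists_forall_algHom_apply_ne_zero_of_powerBasis pb
    (perfectCore_fractionRing_eq_bot (σ := σ) Ω) (mul_ne_zero hc' ha0)
  refine ⟨r₀, fun r hr F _ _ _ hF ↦ ?_⟩
  obtain ⟨ψ, hψ⟩ := hr₀ r hr F hF
  rw [map_mul] at hψ
  obtain ⟨Ψ, hΨ⟩ := exists_algHom_extending hden (left_ne_zero_of_mul hψ)
  refine ⟨Ψ, fun h ↦ right_ne_zero_of_mul hψ ?_⟩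
  rw [← hΨ, ← ha, Algebra.smul_def, map_mul, h, mul_zero]

theorem exists_forall_aeval_eq_zero_and_aeval_ne_zero {τ : Type*} [Finite τ]
    {P δ : MvPolynomial τ k} (hP : Irreducible (MvPolynomial.map (algebraMap k Ω) P))
    (hδ : ¬ P ∣ δ) : ∃ r₀, ∀ r ≥ r₀, ∀ (F : Type*) [Field F] [Fintype F] [Algebra k F],
      Fintype.card F = Fintype.card k ^ r →
      ∃ v : τ → F, MvPolynomial.aeval v P = 0 ∧ MvPolynomial.aeval v δ ≠ 0 := by
  classical
  have hirr := irreducible_of_irreducible_mvPolynomial_map _ hP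
  obtain ⟨j, hj⟩ := exists_degreeOf_ne_zero_of_irreducible hirr
  let σ := {i // i ≠ j}
  let e : MvPolynomial τ k ≃ₐ[k] (MvPolynomial σ k)[X] :=
    (MvPolynomial.renameEquiv k (Equiv.optionSubtypeNe j).symm).trans
      (MvPolynomial.optionEquivLeft k σ)
  have hdeg : (e P).degree ≠ 0 := fun h ↦ hj <|
    (MvPolynomial.degreeOf_eq_natDegree j P).trans (natDegree_eq_of_degree_eq_some h)
  have hprime : Prime (e P) := ((MulEquiv.irreducible_iff e).2 hirr).prime
  have := AdjoinRoot.isDomain_of_prime hprime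
  have : FaithfulSMul (MvPolynomial σ k) (AdjoinRoot (e P)) :=
    (faithfulSMul_iff_algebraMap_injective _ _).2 (AdjoinRoot.of.injective_of_degree_ne_zero hdeg)
  let E : (MvPolynomial τ k ⧸ Ideal.span {P}) ≃ₐ[k] AdjoinRoot (e P) :=
    Ideal.quotientEquivAlg _ _ e (by simp [Ideal.map_span])
  have := isDomain_tensorProduct_mvPolynomial_quotient Ω hP
  have : IsDomain (Ω ⊗[k] AdjoinRoot (e P)) :=
    (Algebra.TensorProduct.congr (AlgEquiv.refl : Ω ≃ₐ[k] Ω) E).symm.toMulEquiv.isDomain _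
  obtain ⟨r₀, hr₀⟩ := exists_forall_algHom_apply_ne_zero Ω (σ := σ)
    (y := AdjoinRoot.root (e P)) ⟨e P, hprime.ne_zero, by simp [AdjoinRoot.aeval_eq]⟩
    AdjoinRoot.adjoinRoot_eq_top (δ := E (Ideal.Quotient.mk _ δ)) (by
      rwa [Ne, EmbeddingLike.map_eq_zero_iff, Ideal.Quotient.eq_zero_iff_dvd])
  refine ⟨r₀, fun r hr F _ _ _ hF ↦ ?_⟩
  obtain ⟨ψ, hψ⟩ := hr₀ r hr F hF
  let Ψ : MvPolynomial τ k →ₐ[k] F := (ψ.comp E.toAlgHom).comp (Ideal.Quotient.mkₐ k _)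
  have hΨ (Q) : MvPolynomial.aeval (fun i ↦ Ψ (MvPolynomial.X i)) Q = Ψ Q :=
    DFunLike.congr_fun (MvPolynomial.aeval_unique Ψ).symm Q
  refine ⟨fun i ↦ Ψ (MvPolynomial.X i), ?_, ?_⟩
  · rw [hΨ, AlgHom.comp_apply, Ideal.Quotient.mkₐ_eq_mk,
      (Ideal.Quotient.eq_zero_iff_dvd P P).2 dvd_rfl, map_zero]
  · rwa [hΨ]

end Hypersurface

section PlanarFunctions

theorem not_isPlanarEven_of_sum_eq_zero {F : Type} [Field F] [CharP F 2] {f : F → F} {x y z : F}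
    (hxy : x + y ≠ 0) (hxz : x + z ≠ 0)
    (h : f x + f y + f z + f (x + y + z) + (x + y) * (x + z) = 0) : ¬ IsPlanarEven f := by
  have h2 : (2 : F) = 0 := CharTwo.two_eq_zero
  refine fun hf ↦ hxy (CharTwo.add_eq_zero.2 ((hf (x + z) hxz).1 ?_))
  have hx : x + (x + z) = z := by linear_combination x * h2
  have hy : y + (x + z) = x + y + z := by ring
  simp only [hx, hy]
  linear_combination h - (f (x + y + z) + f y + (x + z) * y) * h2

theorem irreducible_X_add_X {σ k : Type*} [Field k] {i j : σ} (hij : i ≠ j) :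
    Irreducible (MvPolynomial.X i + MvPolynomial.X j : MvPolynomial σ k) := by
  have hcoeff : MvPolynomial.coeff (Finsupp.single i 1)
      (MvPolynomial.X i + MvPolynomial.X j : MvPolynomial σ k) = 1 := by
    classical
    simp [MvPolynomial.coeff_X, Finsupp.single_left_inj, hij.symm]
  refine MvPolynomial.irreducible_of_totalDegree_eq_one ?_ fun c hc ↦
    isUnit_of_dvd_one (hcoeff ▸ hc (Finsupp.single i 1))
  refine ((MvPolynomial.isHomogeneous_X k i).add (MvPolynomial.isHomogeneous_X k j)).totalDegree ?_
  intro h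
  simp [h] at hcoeff

theorem coeff_one_coeff_one_aeval_eq_zero {R : Type*} [CommSemiring R] {a : R[X][X]}
    (ha : ∀ n : ℕ, ((a ^ n).coeff 1).coeff 1 = 0) (f : R[X]) :
    ((aeval a f).coeff 1).coeff 1 = 0 := by
  simp [aeval_eq_sum_range, ha]

theorem not_X_sq_dvd_aeval_add {R : Type*} [CommRing R] [Nontrivial R] [CharP R 2] (f : R[X]) :
    ¬ X ^ 2 ∣ aeval (C X : R[X][X]) f + aeval (C X + X : R[X][X]) f +
      aeval (0 : R[X][X]) f + aeval (X : R[X][X]) f + X * C X := by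
  rintro ⟨W, hW⟩
  have hCX : ((aeval (C X : R[X][X]) f).coeff 1).coeff 1 = 0 :=
    coeff_one_coeff_one_aeval_eq_zero (fun n ↦ by
      rw [← C_pow, coeff_C_of_ne_zero one_ne_zero, coeff_zero]) f
  have hadd : ((aeval (C X + X : R[X][X]) f).coeff 1).coeff 1 = 0 :=
    coeff_one_coeff_one_aeval_eq_zero (fun n ↦ by
      rw [add_comm, coeff_X_add_C_pow, Nat.choose_one_right, ← C_eq_natCast, coeff_mul_C,
        coeff_X_pow]
      obtain rfl | hn := eq_or_ne n 2
      · simpa using CharP.cast_eq_zero R 2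
      · simp [show 1 ≠ n - 1 by omega]) f
  have hzero : ((aeval (0 : R[X][X]) f).coeff 1).coeff 1 = 0 :=
    coeff_one_coeff_one_aeval_eq_zero (fun n ↦ by cases n <;> simp [coeff_one]) f
  have hX : ((aeval (X : R[X][X]) f).coeff 1).coeff 1 = 0 :=
    coeff_one_coeff_one_aeval_eq_zero (fun n ↦ by
      rw [coeff_X_pow]; split_ifs <;> simp [coeff_one]) f
  have hcoeff := congrArg (fun p : R[X][X] ↦ (p.coeff 1).coeff 1) hW
  simp [hCX, hadd, hzero, hX, sq, mul_assoc, coeff_X_mul] at hcoeff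

theorem not_X_add_X_sq_dvd {R τ : Type*} [CommRing R] [Nontrivial R] [CharP R 2] (f : R[X])
    {i j l : τ} (hij : i ≠ j) (hil : i ≠ l) (hjl : j ≠ l) :
    ¬ (MvPolynomial.X i + MvPolynomial.X j : MvPolynomial τ R) ^ 2 ∣
      aeval (MvPolynomial.X i) f + aeval (MvPolynomial.X j) f + aeval (MvPolynomial.X l) f +
        aeval (MvPolynomial.X i + MvPolynomial.X j + MvPolynomial.X l) f +
        (MvPolynomial.X i + MvPolynomial.X j) * (MvPolynomial.X i + MvPolynomial.X l) := by
  classical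
  let s : MvPolynomial τ R →ₐ[R] R[X][X] := MvPolynomial.aeval fun t ↦
    if t = i then C X else if t = j then C X + X else 0
  have hi : s (MvPolynomial.X i) = C X := by simp [s]
  have hj : s (MvPolynomial.X j) = C X + X := by simp [s, hij.symm]
  have hl : s (MvPolynomial.X l) = 0 := by simp [s, hil.symm, hjl.symm]
  have hadd : (C X + (C X + X) : R[X][X]) = X := by
    rw [← add_assoc, CharTwo.add_self_eq_zero, zero_add]
  intro h
  have hs := map_dvd s h
  simp only [map_pow, map_mul, map_add, ← aeval_algHom_apply, hi, hj, hl, add_zero, hadd] at hs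
  exact not_X_sq_dvd_aeval_add f hs

theorem not_dvd_X_add_X_mul_X_add_X {k τ : Type*} [Field k] [CharP k 2] {f : k[X]}
    {P H : MvPolynomial τ k} {i j l : τ} (hij : i ≠ j) (hil : i ≠ l) (hjl : j ≠ l)
    (hH : (MvPolynomial.X i + MvPolynomial.X j) * (MvPolynomial.X i + MvPolynomial.X l) * H =
      aeval (MvPolynomial.X i) f + aeval (MvPolynomial.X j) f + aeval (MvPolynomial.X l) f +
        aeval (MvPolynomial.X i + MvPolynomial.X j + MvPolynomial.X l) f +
        (MvPolynomial.X i + MvPolynomial.X j) * (MvPolynomial.X i + MvPolynomial.X l))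
    (hP : Irreducible P) (hPH : P ∣ H) :
    ¬ P ∣ (MvPolynomial.X i + MvPolynomial.X j) * (MvPolynomial.X i + MvPolynomial.X l) := by
  refine hP.prime.not_dvd_mul (fun h ↦ ?_) fun h ↦ ?_
  · obtain ⟨W, rfl⟩ := (hP.dvd_symm (irreducible_X_add_X hij) h).trans hPH
    exact not_X_add_X_sq_dvd f hij hil hjl
      ⟨(MvPolynomial.X i + MvPolynomial.X l) * W, by rw [← hH]; ring⟩
  · obtain ⟨W, rfl⟩ := (hP.dvd_symm (irreducible_X_add_X hil) h).trans hPH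
    exact not_X_add_X_sq_dvd f hil hij hjl.symm
      ⟨(MvPolynomial.X i + MvPolynomial.X j) * W, by
        rw [add_right_comm (MvPolynomial.X i) (MvPolynomial.X l)]; linear_combination -hH⟩

end PlanarFunctions

theorem not_exceptional_planar_even_of_abs_irreducible_factor
    (m : ℕ) (hm : 0 < m)
    (K : Type) [Field K] [Fintype K] (hK : Fintype.card K = 2 ^ m)
    (f : K[X]) (H : MvPolynomial (Fin 3) K)
    (hH : (MvPolynomial.X 0 + MvPolynomial.X 1) * (MvPolynomial.X 0 + MvPolynomial.X 2) * H =
      Polynomial.aeval (MvPolynomial.X 0) f + Polynomial.aeval (MvPolynomial.X 1) f +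
        Polynomial.aeval (MvPolynomial.X 2) f +
        Polynomial.aeval (MvPolynomial.X 0 + MvPolynomial.X 1 + MvPolynomial.X 2) f +
        (MvPolynomial.X 0 + MvPolynomial.X 1) * (MvPolynomial.X 0 + MvPolynomial.X 2))
    (hirr : ∃ g : MvPolynomial (Fin 3) K, g ∣ H ∧
      Irreducible (MvPolynomial.map (algebraMap K (AlgebraicClosure K)) g)) :
    ¬ IsExceptionalPlanarEven f := by
  intro hex
  have : Fact (Nat.Prime 2) := ⟨Nat.prime_two⟩
  have : CharP K 2 := charP_of_card_eq_prime_pow hK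
  obtain ⟨P, hPH, hP⟩ := hirr
  have hδ := not_dvd_X_add_X_mul_X_add_X (by decide) (by decide) (by decide) hH
    (irreducible_of_irreducible_mvPolynomial_map _ hP) hPH
  obtain ⟨r₀, hr₀⟩ := exists_forall_aeval_eq_zero_and_aeval_ne_zero (AlgebraicClosure K) hP hδ
  obtain ⟨r, ⟨hrpos, hr⟩, hrr⟩ := hex.exists_gt r₀
  have : NeZero r := ⟨hrpos.ne'⟩
  let F := FiniteField.Extension K 2 r
  let _ : Fintype F := Fintype.ofFinite F
  have hF : Fintype.card F = Fintype.card K ^ r := by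
    simpa only [Fintype.card_eq_nat_card] using FiniteField.natCard_extension K 2 r
  have : CharP F 2 := charP_of_injective_algebraMap (algebraMap K F).injective 2
  obtain ⟨v, hv, hne⟩ := hr₀ r hrr.le F hF
  have hH0 : MvPolynomial.aeval v H = 0 := zero_dvd_iff.1 (hv ▸ map_dvd _ hPH)
  simp only [map_mul, map_add, MvPolynomial.aeval_X] at hne
  refine not_isPlanarEven_of_sum_eq_zero (left_ne_zero_of_mul hne) (right_ne_zero_of_mul hne) ?_
    (hr F hF)
  simpa [← aeval_algHom_apply, hH0] using (congrArg (MvPolynomial.aeval v) hH).symm
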